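/- arXiv:2105.09037 — 5 statements merged into one kernel-verified Lean document; each statement's English description precedes it below -/
import Mathlib

section
/- For every behaviour P with M settings (for any M ≥ 1, with binary outcomes), the measure of locality equals the measure of free choice: μ_L(P) = μ_F(P). -/
/-! For each fixed setting distribution `p` the two suprema already agree, because every model of
one kind can be turned into a model of the other kind with at least the same weight.

* `exists_LHV_ge`: in an FHV model, a nonlocal `λ` is split into four points `(λ, a, b)` which
  output `(a, b)` deterministically (hence locally) and whose conditional weight is
  `q(λ) P(a,b|x,y,λ)`. The local points stay free, so the free weight is at least the old local
  weight.
* `exists_FHV_ge`: in an LHV model, the nonfree points have the same total weight `W` under `q` and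
  under every `q(·|x,y)`. Giving all of them the averaged response
  `W⁻¹ ∑_{λ nonfree} P(a,b|x,y,λ) q(λ|x,y)` makes it possible to replace `q(·|x,y)` by `q`. The free
  points stay local. -/

open scoped BigOperators Classical
open Finset

noncomputable section

/-- The real value `±1` associated with a Boolean outcome. -/
def outVal (a : Bool) : ℝ := if a then 1 else -1

/-- A behaviour: nonnegative probabilities summing to one for every pair of settings. -/
def IsBehaviour {M N : ℕ} (P : Bool → Bool → Fin M → Fin N → ℝ) : Prop :=
  (∀ a b x y, 0 ≤ P a b x y) ∧ (∀ x y, ∑ a, ∑ b, P a b x y = 1)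

/-- A full-support probability distribution on pairs of settings. -/
def IsSettingDist {M : ℕ} (p : Fin M → Fin M → ℝ) : Prop :=
  (∀ x y, 0 < p x y) ∧ ∑ x, ∑ y, p x y = 1

/-- A hidden-variable model of the behaviour `P` with setting distribution `p`,
with finite hidden-variable space `Fin n`. -/
structure HVModel (M : ℕ) (P : Bool → Bool → Fin M → Fin M → ℝ)
    (p : Fin M → Fin M → ℝ) where
  n : ℕ
  q : Fin n → ℝ
  q_nonneg : ∀ l, 0 ≤ q l
  q_sum : ∑ l, q l = 1
  qc : Fin M → Fin M → Fin n → ℝ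
  qc_nonneg : ∀ x y l, 0 ≤ qc x y l
  qc_sum : ∀ x y, ∑ l, qc x y l = 1
  q_marg : ∀ l, q l = ∑ x, ∑ y, qc x y l * p x y
  Pc : Fin n → Bool → Bool → Fin M → Fin M → ℝ
  Pc_nonneg : ∀ l a b x y, 0 ≤ Pc l a b x y
  Pc_sum : ∀ l x y, ∑ a, ∑ b, Pc l a b x y = 1
  reproduce : ∀ a b x y, P a b x y = ∑ l, Pc l a b x y * qc x y l

namespace HVModel

variable {M : ℕ} {P : Bool → Bool → Fin M → Fin M → ℝ} {p : Fin M → Fin M → ℝ}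

/-- A hidden variable is local if the conditional outcome distribution factorises. -/
def IsLocalPoint (N : HVModel M P p) (l : Fin N.n) : Prop :=
  ∃ α β : Bool → Fin M → ℝ,
    (∀ a x, 0 ≤ α a x) ∧ (∀ x, ∑ a, α a x = 1) ∧
    (∀ b y, 0 ≤ β b y) ∧ (∀ y, ∑ b, β b y = 1) ∧
    (∀ a b x y, N.Pc l a b x y = α a x * β b y)

/-- A hidden variable is free if it is independent of the settings. -/
def IsFreePoint (N : HVModel M P p) (l : Fin N.n) : Prop :=
  ∀ x y, N.qc x y l = N.q l

/-- The total weight of the local hidden variables. -/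
def localWeight (N : HVModel M P p) : ℝ :=
  ∑ l, if N.IsLocalPoint l then N.q l else 0

/-- The total weight of the free hidden variables. -/
def freeWeight (N : HVModel M P p) : ℝ :=
  ∑ l, if N.IsFreePoint l then N.q l else 0

/-- An FHV model: every hidden variable is free. -/
def IsFHV (N : HVModel M P p) : Prop := ∀ l, N.IsFreePoint l

/-- An LHV model: every hidden variable is local. -/
def IsLHV (N : HVModel M P p) : Prop := ∀ l, N.IsLocalPoint l

end HVModel

/-- Local weights achievable by FHV models of `P` with setting distribution `p`. -/
def FHVLocalWeights (M : ℕ) (P : Bool → Bool → Fin M → Fin M → ℝ)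
    (p : Fin M → Fin M → ℝ) : Set ℝ :=
  {w | ∃ N : HVModel M P p, N.IsFHV ∧ w = N.localWeight}

/-- Free weights achievable by LHV models of `P` with setting distribution `p`. -/
def LHVFreeWeights (M : ℕ) (P : Bool → Bool → Fin M → Fin M → ℝ)
    (p : Fin M → Fin M → ℝ) : Set ℝ :=
  {w | ∃ N : HVModel M P p, N.IsLHV ∧ w = N.freeWeight}

/-- The measure of locality `μ_L`. -/
def muL (M : ℕ) (P : Bool → Bool → Fin M → Fin M → ℝ) : ℝ :=
  ⨅ sp : {f : Fin M → Fin M → ℝ // IsSettingDist f}, sSup (FHVLocalWeights M P sp.1)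

/-- The measure of free choice `μ_F`. -/
def muF (M : ℕ) (P : Bool → Bool → Fin M → Fin M → ℝ) : ℝ :=
  ⨅ sp : {f : Fin M → Fin M → ℝ // IsSettingDist f}, sSup (LHVFreeWeights M P sp.1)

namespace HVModel

variable {M : ℕ} {P : Bool → Bool → Fin M → Fin M → ℝ} {p : Fin M → Fin M → ℝ}

/-- Nonlocal points are traded for nonfree ones by revealing the outcomes in the hidden variable.
Local points are also split into four, with equal weights, to keep the index set a product. -/
theorem exists_LHV_ge (hp : IsSettingDist p) (N : HVModel M P p) (hN : N.IsFHV) :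
    ∃ N' : HVModel M P p, N'.IsLHV ∧ N.localWeight ≤ N'.freeWeight := by
  let e := Fintype.equivFin (Fin N.n × Bool × Bool)
  let f : Fin M → Fin M → Fin N.n × Bool × Bool → ℝ := fun x y k =>
    if N.IsLocalPoint k.1 then N.q k.1 / 4 else N.q k.1 * N.Pc k.1 k.2.1 k.2.2 x y
  let g : Fin N.n × Bool × Bool → Bool → Bool → Fin M → Fin M → ℝ := fun k a b x y =>
    if N.IsLocalPoint k.1 then N.Pc k.1 a b x y
    else (if a = k.2.1 then 1 else 0) * (if b = k.2.2 then 1 else 0)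
  have hf0 : ∀ x y k, 0 ≤ f x y k := by
    intro x y k
    have := N.q_nonneg k.1
    have := N.Pc_nonneg k.1 k.2.1 k.2.2 x y
    simp only [f]
    split_ifs <;> positivity
  have hf1 : ∀ x y, ∑ k, f x y k = 1 := by
    intro x y
    rw [← N.q_sum, Fintype.sum_prod_type]
    refine Finset.sum_congr rfl fun l _ => ?_
    have h1 := N.Pc_sum l x y
    rw [Fintype.sum_prod_type]
    simp only [f]
    split_ifs
    · simp; ring
    · simp only [← Finset.mul_sum, h1, mul_one]
  have hg0 : ∀ k a b x y, 0 ≤ g k a b x y := by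
    intro k a b x y
    have := N.Pc_nonneg k.1 a b x y
    simp only [g]
    split_ifs <;> simp [this]
  have hg1 : ∀ k x y, ∑ a, ∑ b, g k a b x y = 1 := by
    intro k x y
    have h1 := N.Pc_sum k.1 x y
    simp only [g]
    split_ifs
    · exact h1
    · simp
  have hrep : ∀ a b x y, P a b x y = ∑ k, g k a b x y * f x y k := by
    intro a b x y
    rw [N.reproduce, Fintype.sum_prod_type]
    refine Finset.sum_congr rfl fun l _ => ?_
    rw [hN l x y, Fintype.sum_prod_type]
    simp only [f, g]
    split_ifs
    · simp; ring
    · cases a <;> cases b <;> simp <;> ring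
  have hpp := hp.2
  refine ⟨{ n := Fintype.card (Fin N.n × Bool × Bool)
            q := fun k => ∑ x, ∑ y, f x y (e.symm k) * p x y
            q_nonneg := fun k => Finset.sum_nonneg fun x _ => Finset.sum_nonneg fun y _ =>
              mul_nonneg (hf0 _ _ _) (hp.1 x y).le
            q_sum := ?_
            qc := fun x y k => f x y (e.symm k)
            qc_nonneg := fun x y k => hf0 _ _ _
            qc_sum := fun x y => (e.symm.sum_comp (f x y)).trans (hf1 x y)
            q_marg := fun _ => rfl
            Pc := fun k => g (e.symm k)
            Pc_nonneg := fun k => hg0 _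
            Pc_sum := fun k => hg1 _
            reproduce := fun a b x y => (hrep a b x y).trans
              (e.symm.sum_comp (fun k => g k a b x y * f x y k)).symm }, ?_, ?_⟩
  · rw [Finset.sum_comm, ← hpp]
    refine Finset.sum_congr rfl fun x _ => ?_
    rw [Finset.sum_comm]
    refine Finset.sum_congr rfl fun y _ => ?_
    rw [← Finset.sum_mul, e.symm.sum_comp (f x y), hf1, one_mul]
  · intro k
    by_cases h : N.IsLocalPoint (e.symm k).1
    · obtain ⟨α, β, h1, h2, h3, h4, h5⟩ := h
      refine ⟨α, β, h1, h2, h3, h4, fun a b x y => ?_⟩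
      simp only [g]
      rw [if_pos ⟨α, β, h1, h2, h3, h4, h5⟩, h5]
    · refine ⟨fun a _ => if a = (e.symm k).2.1 then 1 else 0,
        fun b _ => if b = (e.symm k).2.2 then 1 else 0, ?_, ?_, ?_, ?_, ?_⟩
      · intro a x; dsimp only; split_ifs <;> norm_num
      · intro x; simp
      · intro a x; dsimp only; split_ifs <;> norm_num
      · intro x; simp
      · intro a b x y
        simp only [g]
        rw [if_neg h]
  · have hw : N.localWeight = ∑ k : Fin N.n × Bool × Bool,
        if N.IsLocalPoint k.1 then N.q k.1 / 4 else 0 := by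
      rw [Fintype.sum_prod_type]
      refine Finset.sum_congr rfl fun l _ => ?_
      rw [Fintype.sum_prod_type]
      split_ifs
      · simp; ring
      · simp
    rw [hw, ← e.symm.sum_comp]
    refine Finset.sum_le_sum fun k _ => ?_
    by_cases h : N.IsLocalPoint (e.symm k).1
    · have hq : ∑ x, ∑ y, f x y (e.symm k) * p x y = N.q (e.symm k).1 / 4 := by
        simp only [f, if_pos h, ← Finset.mul_sum, hpp, mul_one]
      rw [if_pos h, if_pos]
      · exact hq.ge
      · intro x y
        refine Eq.trans ?_ hq.symm
        simp only [f, if_pos h]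
    · rw [if_neg h]
      split_ifs
      · apply HVModel.q_nonneg
      · exact le_rfl

/-- Nonfree points are traded for nonlocal ones by averaging their responses. -/
theorem exists_FHV_ge (hP : IsBehaviour P) (hp : IsSettingDist p) (N : HVModel M P p)
    (hN : N.IsLHV) :
    ∃ N' : HVModel M P p, N'.IsFHV ∧ N.freeWeight ≤ N'.localWeight := by
  let W : ℝ := ∑ l, if N.IsFreePoint l then 0 else N.q l
  have hW : ∀ x y, ∑ l, (if N.IsFreePoint l then 0 else N.qc x y l) = W := by
    intro x y
    have h : ∑ l, ((if N.IsFreePoint l then 0 else N.qc x y l)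
        - (if N.IsFreePoint l then 0 else N.q l)) = ∑ l, (N.qc x y l - N.q l) := by
      refine Finset.sum_congr rfl fun l _ => ?_
      split_ifs with h
      · rw [h x y]; simp
      · rfl
    rw [Finset.sum_sub_distrib, Finset.sum_sub_distrib, N.qc_sum, N.q_sum] at h
    linarith
  have hW0 : 0 ≤ W := Finset.sum_nonneg fun l _ => by
    have := N.q_nonneg l
    split_ifs <;> simp [this]
  let S : Bool → Bool → Fin M → Fin M → ℝ := fun a b x y =>
    ∑ l, if N.IsFreePoint l then 0 else N.Pc l a b x y * N.qc x y l
  have hS0 : ∀ a b x y, 0 ≤ S a b x y := fun a b x y => Finset.sum_nonneg fun l _ => by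
    have := mul_nonneg (N.Pc_nonneg l a b x y) (N.qc_nonneg x y l)
    split_ifs <;> simp [this]
  have hS1 : ∀ x y, ∑ a, ∑ b, S a b x y = W := by
    intro x y
    simp only [S]
    rw [← hW x y]
    simp only [Fintype.sum_bool, ← Finset.sum_add_distrib]
    refine Finset.sum_congr rfl fun l _ => ?_
    have h1 := N.Pc_sum l x y
    simp only [Fintype.sum_bool] at h1
    split_ifs
    · simp
    · linear_combination N.qc x y l * h1
  -- If `W = 0` the common response is irrelevant, and `P` itself is a convenient distribution.
  let R : Bool → Bool → Fin M → Fin M → ℝ := fun a b x y =>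
    if W = 0 then P a b x y else S a b x y / W
  have hR0 : ∀ a b x y, 0 ≤ R a b x y := by
    intro a b x y
    simp only [R]
    split_ifs
    · exact hP.1 a b x y
    · exact div_nonneg (hS0 a b x y) hW0
  have hR1 : ∀ x y, ∑ a, ∑ b, R a b x y = 1 := by
    intro x y
    simp only [R]
    split_ifs with h
    · exact hP.2 x y
    · simp only [← Finset.sum_div, hS1]
      exact div_self h
  have hRW : ∀ a b x y, R a b x y * W = S a b x y := by
    intro a b x y
    simp only [R]
    split_ifs with h
    · have h1 := hS1 x y
      have := hS0 true true x y
      have := hS0 true false x y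
      have := hS0 false true x y
      have := hS0 false false x y
      simp only [Fintype.sum_bool] at h1
      rw [h, mul_zero]
      cases a <;> cases b <;> linarith
    · exact div_mul_cancel₀ _ h
  refine ⟨{ n := N.n
            q := N.q
            q_nonneg := N.q_nonneg
            q_sum := N.q_sum
            qc := fun _ _ => N.q
            qc_nonneg := fun _ _ => N.q_nonneg
            qc_sum := fun _ _ => N.q_sum
            q_marg := fun l => by simp only [← Finset.mul_sum, hp.2, mul_one]
            Pc := fun l a b x y => if N.IsFreePoint l then N.Pc l a b x y else R a b x y
            Pc_nonneg := ?_
            Pc_sum := ?_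
            reproduce := ?_ }, fun l x y => rfl, ?_⟩
  · intro l a b x y
    have := N.Pc_nonneg l a b x y
    have := hR0 a b x y
    split_ifs <;> assumption
  · intro l x y
    have := N.Pc_sum l x y
    have := hR1 x y
    split_ifs <;> assumption
  · intro a b x y
    have h2 : ∑ l, (if N.IsFreePoint l then 0 else R a b x y * N.q l) = S a b x y := by
      rw [← hRW, Finset.mul_sum]
      refine Finset.sum_congr rfl fun l _ => ?_
      split_ifs <;> simp
    have h3 : ∑ l, ((if N.IsFreePoint l then N.Pc l a b x y else R a b x y) * N.q l
          - (if N.IsFreePoint l then 0 else R a b x y * N.q l))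
        = ∑ l, (N.Pc l a b x y * N.qc x y l
          - (if N.IsFreePoint l then 0 else N.Pc l a b x y * N.qc x y l)) := by
      refine Finset.sum_congr rfl fun l _ => ?_
      split_ifs with h
      · rw [h x y]
      · simp
    rw [Finset.sum_sub_distrib, Finset.sum_sub_distrib, h2, ← N.reproduce] at h3
    simp only [S] at h3
    linarith
  · refine Finset.sum_le_sum fun l _ => ?_
    have h0 := N.q_nonneg l
    by_cases h : N.IsFreePoint l
    · rw [if_pos h, if_pos]
      obtain ⟨α, β, h1, h2, h3, h4, h5⟩ := hN l
      refine ⟨α, β, h1, h2, h3, h4, fun a b x y => ?_⟩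
      exact (if_pos h).trans (h5 a b x y)
    · rw [if_neg h]
      split_ifs
      · exact h0
      · exact le_rfl

end HVModel

theorem measure_locality_eq_measure_free_choice
    (M : ℕ) (hM : 1 ≤ M) (P : Bool → Bool → Fin M → Fin M → ℝ)
    (hP : IsBehaviour P) :
    muL M P = muF M P := by
  refine iInf_congr fun sp => csSup_eq_csSup_of_forall_exists_le ?_ ?_
  · rintro _ ⟨N, hN, rfl⟩
    obtain ⟨N', hN', h⟩ := N.exists_LHV_ge sp.2 hN
    exact ⟨_, ⟨N', hN', rfl⟩, h⟩
  · rintro _ ⟨N, hN, rfl⟩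
    obtain ⟨N', hN', h⟩ := N.exists_FHV_ge hP sp.2 hN
    exact ⟨_, ⟨N', hN', rfl⟩, h⟩
end
end

section
/- For every non-signalling behaviour P with two settings x,y ∈ {0,1}, the measure of locality satisfies μ_L(P) = (4 − S_max)/2 if S_max > 2, and μ_L(P) = 1 if S_max ≤ 2, where S_max is the maximal absolute value of the four CHSH expressions of P. -/
/-!
Write `S` for the CHSH value `chsh s P` of a sign pattern `s` whose four signs have product `-1`;
up to the choice of `s`, `S = Smax P` (`Smax_eq_chsh`).

*Upper bound.* In an FHV model `P` is the `q`-average of the behaviours at the hidden variables, and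
the CHSH value is linear. Product behaviours have value at most `2`, arbitrary ones at most `4`, so
local weight `w` forces `S ≤ 2 w + 4 (1 - w)`, that is `w ≤ (4 - S) / 2` (`localWeight_le`).

*Attaining it for `S > 2`.* There are eight events `(a, b, x, y)` whose product `a b` has the sign
opposite to `s x y`. Each of them is produced by exactly one of the eight deterministic strategies
of CHSH value `2`. For non-signalling `P`, mixing these strategies with the probabilities of their
events, and adding the PR box with weight `(S - 2) / 2`, gives back `P`; the deterministic part has
weight `(4 - S) / 2` (`exists_weight_nonlocal`).

*The case `Smax P ≤ 2`.* This is Fine's theorem. The CHSH inequalities are what is needed to find,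
for both settings of Alice, joint distributions of her outcome and the pair of Bob's outcomes that
agree on the pair (`exists_triples`). Taking the pair as hidden variable, with Alice's response the
conditional distribution, gives a fully local model (`exists_weight_local`).

Neither bound depends on the setting distribution, so the infimum in `muL` is trivial (`muL_eq_of`).
-/

open scoped BigOperators Classical
open Finset

noncomputable section

/-- The correlator `⟨ab⟩_{xy}`. -/
def corr {M N : ℕ} (P : Bool → Bool → Fin M → Fin N → ℝ) (x : Fin M) (y : Fin N) : ℝ :=
  ∑ a, ∑ b, outVal a * outVal b * P a b x y

/-- Non-signalling for a two-setting behaviour. -/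
def NonSignalling (P : Bool → Bool → Fin 2 → Fin 2 → ℝ) : Prop :=
  (∀ a x y y', ∑ b, P a b x y = ∑ b, P a b x y') ∧
  (∀ b y x x', ∑ a, P a b x y = ∑ a, P a b x' y)

def S1 (P : Bool → Bool → Fin 2 → Fin 2 → ℝ) : ℝ :=
  corr P 0 0 + corr P 0 1 + corr P 1 0 - corr P 1 1

def S2 (P : Bool → Bool → Fin 2 → Fin 2 → ℝ) : ℝ :=
  corr P 0 0 + corr P 0 1 - corr P 1 0 + corr P 1 1

def S3 (P : Bool → Bool → Fin 2 → Fin 2 → ℝ) : ℝ :=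
  corr P 0 0 - corr P 0 1 + corr P 1 0 + corr P 1 1

def S4 (P : Bool → Bool → Fin 2 → Fin 2 → ℝ) : ℝ :=
  -corr P 0 0 + corr P 0 1 + corr P 1 0 + corr P 1 1

/-- Maximal absolute value of the four CHSH expressions. -/
def Smax (P : Bool → Bool → Fin 2 → Fin 2 → ℝ) : ℝ :=
  max (max |S1 P| |S2 P|) (max |S3 P| |S4 P|)

/-- The value of a CHSH-type expression whose four signs are recorded by `s`,
with `true` for `+1`. -/
def chsh (s : Fin 2 → Fin 2 → Bool) (P : Bool → Bool → Fin 2 → Fin 2 → ℝ) : ℝ :=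
  ∑ x, ∑ y, outVal (s x y) * corr P x y

/-- A sign pattern is a CHSH pattern when the product of its four signs is `-1`. -/
def OddSign (s : Fin 2 → Fin 2 → Bool) : Prop :=
  xor (xor (s 0 0) (s 0 1)) (xor (s 1 0) (s 1 1)) = true

/-- A behaviour that factorises into one response function for each party. -/
def IsProduct (Q : Bool → Bool → Fin 2 → Fin 2 → ℝ) : Prop :=
  ∃ α β : Bool → Fin 2 → ℝ,
    (∀ a x, 0 ≤ α a x) ∧ (∀ x, ∑ a, α a x = 1) ∧
    (∀ b y, 0 ≤ β b y) ∧ (∀ y, ∑ b, β b y = 1) ∧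
    (∀ a b x y, Q a b x y = α a x * β b y)

lemma corr_eq (P : Bool → Bool → Fin 2 → Fin 2 → ℝ) (x y : Fin 2) :
    corr P x y = P true true x y - P true false x y - P false true x y + P false false x y := by
  simp [corr, outVal]; ring

/-- The algebraic bound: each of the four correlators lies in `[-1, 1]`. -/
lemma chsh_le_four (s : Fin 2 → Fin 2 → Bool) {Q : Bool → Bool → Fin 2 → Fin 2 → ℝ}
    (hQ : IsBehaviour Q) : chsh s Q ≤ 4 := by
  have key : ∀ x y, outVal (s x y) * corr Q x y ≤ 1 := by
    intro x y
    have h1 := hQ.2 x y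
    have htt := hQ.1 true true x y
    have htf := hQ.1 true false x y
    have hft := hQ.1 false true x y
    have hff := hQ.1 false false x y
    simp only [Fintype.sum_bool] at h1
    rw [corr_eq]
    cases s x y <;> simp [outVal] <;> linarith
  simp only [chsh, Fin.sum_univ_two]
  linarith [key 0 0, key 0 1, key 1 0, key 1 1]

/-- The CHSH inequality for a single product behaviour. -/
lemma chsh_le_two {s : Fin 2 → Fin 2 → Bool} (hs : OddSign s)
    {Q : Bool → Bool → Fin 2 → Fin 2 → ℝ} (hQ : IsProduct Q) : chsh s Q ≤ 2 := by
  obtain ⟨α, β, hα, hα1, hβ, hβ1, h⟩ := hQ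
  have hc : ∀ x y, corr Q x y = (α true x - α false x) * (β true y - β false y) := by
    intro x y
    rw [corr_eq]; simp only [h]; ring
  have hA : ∀ x, |α true x - α false x| ≤ 1 := by
    intro x
    have := hα1 x
    have := hα true x
    have := hα false x
    simp only [Fintype.sum_bool] at *
    rw [abs_le]; constructor <;> linarith
  have hB : ∀ x, |β true x - β false x| ≤ 1 := by
    intro x
    have := hβ1 x
    have := hβ true x
    have := hβ false x
    simp only [Fintype.sum_bool] at *
    rw [abs_le]; constructor <;> linarith
  have hmul : ∀ x u, (α true x - α false x) * u ≤ |u| := by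
    intro x u
    calc _ ≤ |(α true x - α false x) * u| := le_abs_self _
      _ = |α true x - α false x| * |u| := abs_mul _ _
      _ ≤ 1 * |u| := mul_le_mul_of_nonneg_right (hA x) (abs_nonneg u)
      _ = |u| := one_mul _
  -- For an odd sign pattern, one of Alice's responses multiplies `±(B0 + B1)` and the other
  -- `±(B0 - B1)`, so this bounds the whole expression.
  have hsum : ∀ b c : ℝ, |b| ≤ 1 → |c| ≤ 1 → |b + c| + |b - c| ≤ 2 := by
    intro b c hb hc
    rw [abs_le] at hb hc
    rcases abs_cases (b + c) with h | h <;> rcases abs_cases (b - c) with h' | h' <;> linarith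
  have h2 := hsum _ _ (hB 0) (hB 1)
  simp only [chsh, Fin.sum_univ_two, hc]
  set B0 := β true 0 - β false 0
  set B1 := β true 1 - β false 1
  have hp0 := hmul 0 (B0 + B1)
  have hp1 := hmul 1 (B0 + B1)
  have hm0 := hmul 0 (B0 - B1)
  have hm1 := hmul 1 (B0 - B1)
  have hp0' := hmul 0 (-(B0 + B1))
  have hp1' := hmul 1 (-(B0 + B1))
  have hm0' := hmul 0 (-(B0 - B1))
  have hm1' := hmul 1 (-(B0 - B1))
  rw [abs_neg] at hp0' hp1' hm0' hm1'
  unfold OddSign at hs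
  revert hs
  cases s 0 0 <;> cases s 0 1 <;> cases s 1 0 <;> cases s 1 1 <;>
    simp [outVal] <;> linarith

lemma Smax_eq_chsh (P : Bool → Bool → Fin 2 → Fin 2 → ℝ) :
    ∃ s, OddSign s ∧ chsh s P = Smax P := by
  have key : ∀ r : ℝ, ∀ s t : Fin 2 → Fin 2 → Bool, OddSign s → OddSign t →
      chsh s P = r → chsh t P = -r → ∃ s, OddSign s ∧ chsh s P = |r| := by
    intro r s t hs ht h h'
    rcases abs_choice r with hr | hr
    · exact ⟨s, hs, h.trans hr.symm⟩
    · exact ⟨t, ht, h'.trans hr.symm⟩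
  have h1 := key (S1 P) ![![true, true], ![true, false]] ![![false, false], ![false, true]]
    rfl rfl (by simp [chsh, S1, outVal]; ring) (by simp [chsh, S1, outVal]; ring)
  have h2 := key (S2 P) ![![true, true], ![false, true]] ![![false, false], ![true, false]]
    rfl rfl (by simp [chsh, S2, outVal]; ring) (by simp [chsh, S2, outVal]; ring)
  have h3 := key (S3 P) ![![true, false], ![true, true]] ![![false, true], ![false, false]]
    rfl rfl (by simp [chsh, S3, outVal]; ring) (by simp [chsh, S3, outVal]; ring)
  have h4 := key (S4 P) ![![false, true], ![true, true]] ![![true, false], ![false, false]]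
    rfl rfl (by simp [chsh, S4, outVal]; ring) (by simp [chsh, S4, outVal]; ring)
  unfold Smax
  rcases max_choice (max |S1 P| |S2 P|) (max |S3 P| |S4 P|) with h | h <;> rw [h]
  · rcases max_choice |S1 P| |S2 P| with h | h <;> rw [h] <;> assumption
  · rcases max_choice |S3 P| |S4 P| with h | h <;> rw [h] <;> assumption

/-- Any FHV model has local weight at most `(4 - S) / 2`: local points contribute at most `2`
to the CHSH value, all others at most `4`. -/
lemma localWeight_le {s : Fin 2 → Fin 2 → Bool} (hs : OddSign s)
    {P : Bool → Bool → Fin 2 → Fin 2 → ℝ} {p : Fin 2 → Fin 2 → ℝ}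
    (N : HVModel 2 P p) (hN : N.IsFHV) : N.localWeight ≤ (4 - chsh s P) / 2 := by
  have hlin : chsh s P = ∑ l, N.q l * chsh s (N.Pc l) := by
    have hr : ∀ a b x y, P a b x y = ∑ l, N.q l * N.Pc l a b x y := by
      intro a b x y
      rw [N.reproduce]
      exact Finset.sum_congr rfl fun l _ => by rw [hN l x y, mul_comm]
    simp only [chsh, corr_eq, hr, Fin.sum_univ_two, ← Finset.sum_sub_distrib,
      ← Finset.sum_add_distrib, Finset.mul_sum]
    exact Finset.sum_congr rfl fun l _ => by ring
  have hb : ∑ l, N.q l * chsh s (N.Pc l) ≤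
      ∑ l, (4 * N.q l - 2 * (if N.IsLocalPoint l then N.q l else 0)) := by
    refine Finset.sum_le_sum fun l _ => ?_
    have hq := N.q_nonneg l
    split_ifs with hl
    · have := mul_le_mul_of_nonneg_left (chsh_le_two hs (Q := N.Pc l) hl) hq
      linarith
    · have := mul_le_mul_of_nonneg_left
        (chsh_le_four s (Q := N.Pc l) ⟨N.Pc_nonneg l, N.Pc_sum l⟩) hq
      linarith
  rw [Finset.sum_sub_distrib, ← Finset.mul_sum, ← Finset.mul_sum, N.q_sum] at hb
  unfold HVModel.localWeight
  linarith

lemma localWeight_le_one {P : Bool → Bool → Fin 2 → Fin 2 → ℝ} {p : Fin 2 → Fin 2 → ℝ}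
    (N : HVModel 2 P p) : N.localWeight ≤ 1 := by
  rw [← N.q_sum]
  refine Finset.sum_le_sum fun l _ => ?_
  split_ifs
  · exact le_rfl
  · exact N.q_nonneg l

/-- A convex decomposition of `P`, indexed by any finite type, is an FHV model for every setting
distribution, and the components known to be products count towards its local weight. -/
lemma exists_weight_of_decomposition {P : Bool → Bool → Fin 2 → Fin 2 → ℝ}
    {ι : Type} [Fintype ι] (q : ι → ℝ) (hq : ∀ i, 0 ≤ q i) (hq1 : ∑ i, q i = 1)
    (Q : ι → Bool → Bool → Fin 2 → Fin 2 → ℝ) (hQ : ∀ i, IsBehaviour (Q i))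
    (hrep : ∀ a b x y, P a b x y = ∑ i, q i * Q i a b x y)
    (loc : ι → Prop) (hloc : ∀ i, loc i → IsProduct (Q i))
    {p : Fin 2 → Fin 2 → ℝ} (hp : IsSettingDist p) :
    ∃ w ∈ FHVLocalWeights 2 P p, ∑ i, (if loc i then q i else 0) ≤ w := by
  let e := (Fintype.equivFin ι).symm
  let N : HVModel 2 P p :=
    { n := Fintype.card ι
      q := fun l => q (e l)
      q_nonneg := fun l => hq _
      q_sum := by rw [e.sum_comp q]; exact hq1
      qc := fun _ _ l => q (e l)
      qc_nonneg := fun _ _ l => hq _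
      qc_sum := fun _ _ => by rw [e.sum_comp q]; exact hq1
      q_marg := fun l => by simp only [← Finset.mul_sum, hp.2, mul_one]
      Pc := fun l => Q (e l)
      Pc_nonneg := fun l => (hQ _).1
      Pc_sum := fun l => (hQ _).2
      reproduce := fun a b x y => by
        rw [hrep, ← e.sum_comp]
        exact Finset.sum_congr rfl fun l _ => mul_comm _ _ }
  refine ⟨N.localWeight, ⟨N, fun l x y => rfl, rfl⟩, ?_⟩
  rw [← e.sum_comp]
  refine Finset.sum_le_sum fun l _ => ?_
  by_cases h : loc (e l)
  · have : N.IsLocalPoint l := hloc _ h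
    simp [h, this, N]
  · simp only [h, if_false]
    split_ifs
    · exact hq _
    · exact le_rfl

lemma muL_eq_of {P : Bool → Bool → Fin 2 → Fin 2 → ℝ} {w : ℝ}
    (hle : ∀ (p : Fin 2 → Fin 2 → ℝ) (N : HVModel 2 P p), N.IsFHV → N.localWeight ≤ w)
    (hge : ∀ p : Fin 2 → Fin 2 → ℝ, IsSettingDist p → ∃ v ∈ FHVLocalWeights 2 P p, w ≤ v) :
    muL 2 P = w := by
  have hsup : ∀ sp : {f : Fin 2 → Fin 2 → ℝ // IsSettingDist f},
      sSup (FHVLocalWeights 2 P sp.1) = w := by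
    intro sp
    obtain ⟨v, hv, hwv⟩ := hge sp.1 sp.2
    have hub : w ∈ upperBounds (FHVLocalWeights 2 P sp.1) := by
      rintro _ ⟨N, hN, rfl⟩
      exact hle _ N hN
    exact le_antisymm (csSup_le ⟨v, hv⟩ hub) (hwv.trans (le_csSup ⟨w, hub⟩ hv))
  have : Nonempty {f : Fin 2 → Fin 2 → ℝ // IsSettingDist f} :=
    ⟨fun _ _ => 1 / 4, fun _ _ => by norm_num, by norm_num [Fin.sum_univ_two]⟩
  simp only [muL, hsup, ciInf_const]

/-- The point mass at `c`. -/
def pointMass (c a : Bool) : ℝ := if a = c then 1 else 0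

/-- The Popescu–Rohrlich box for the sign pattern `s`. -/
def prBox (s : Fin 2 → Fin 2 → Bool) (a b : Bool) (x y : Fin 2) : ℝ :=
  if xor a b = !(s x y) then 1 / 2 else 0

/-- Alice's output for the deterministic strategy that fails the pattern `s` exactly at
the settings `e.1, e.2.1`, where it outputs `e.2.2` for Alice. -/
def detA (s : Fin 2 → Fin 2 → Bool) (e : Fin 2 × Fin 2 × Bool) (x : Fin 2) : Bool :=
  if x = e.1 then e.2.2 else xor e.2.2 (xor (s e.1 e.2.1) (!(s x e.2.1)))

/-- Bob's output for the same strategy. -/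
def detB (s : Fin 2 → Fin 2 → Bool) (e : Fin 2 × Fin 2 × Bool) (y : Fin 2) : Bool :=
  if y = e.2.1 then xor e.2.2 (s e.1 e.2.1) else xor e.2.2 (!(s e.1 y))

lemma isBehaviour_of_isProduct {Q : Bool → Bool → Fin 2 → Fin 2 → ℝ} (hQ : IsProduct Q) :
    IsBehaviour Q := by
  obtain ⟨α, β, hα, hα1, hβ, hβ1, h⟩ := hQ
  refine ⟨fun a b x y => by rw [h]; exact mul_nonneg (hα _ _) (hβ _ _), fun x y => ?_⟩
  simp only [h, ← Finset.mul_sum, hβ1, mul_one, hα1]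

lemma pointMass_nonneg (c a : Bool) : 0 ≤ pointMass c a := by
  unfold pointMass; split_ifs <;> norm_num

lemma sum_pointMass (c : Bool) : ∑ a, pointMass c a = 1 := by
  simp [pointMass]

lemma isBehaviour_prBox (s : Fin 2 → Fin 2 → Bool) : IsBehaviour (prBox s) := by
  refine ⟨fun a b x y => by unfold prBox; split_ifs <;> norm_num, fun x y => ?_⟩
  cases h : s x y <;> norm_num [prBox, h]

/-- Above the local bound, `P` is the mixture of a PR box, with weight `(S - 2) / 2`, and of the
eight deterministic strategies with CHSH value `2`; each of these fails the sign pattern at exactly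
one event, and its weight is the probability of that event. -/
lemma exists_weight_nonlocal {P : Bool → Bool → Fin 2 → Fin 2 → ℝ}
    (hP : IsBehaviour P) (hNS : NonSignalling P) {s : Fin 2 → Fin 2 → Bool} (hs : OddSign s)
    (hS : 2 ≤ chsh s P) {p : Fin 2 → Fin 2 → ℝ} (hp : IsSettingDist p) :
    ∃ w ∈ FHVLocalWeights 2 P p, (4 - chsh s P) / 2 ≤ w := by
  let q : Option (Fin 2 × Fin 2 × Bool) → ℝ := fun o => o.elim ((chsh s P - 2) / 2)
    fun e => P e.2.2 (xor e.2.2 (s e.1 e.2.1)) e.1 e.2.1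
  let Q : Option (Fin 2 × Fin 2 × Bool) → Bool → Bool → Fin 2 → Fin 2 → ℝ := fun o =>
    o.elim (prBox s) fun e a b x y => pointMass (detA s e x) a * pointMass (detB s e y) b
  have hprod : ∀ e, IsProduct (Q (some e)) := fun e =>
    ⟨fun a x => pointMass (detA s e x) a, fun b y => pointMass (detB s e y) b,
      fun _ _ => pointMass_nonneg _ _, fun _ => sum_pointMass _,
      fun _ _ => pointMass_nonneg _ _, fun _ => sum_pointMass _, fun _ _ _ _ => rfl⟩
  have hsum : ∑ e, q (some e) = (4 - chsh s P) / 2 := by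
    have h := fun x y => hP.2 x y
    have h00 := h 0 0
    have h01 := h 0 1
    have h10 := h 1 0
    have h11 := h 1 1
    simp only [Fintype.sum_bool] at h00 h01 h10 h11
    simp only [q, Option.elim, Fintype.sum_prod_type, Fin.sum_univ_two, Fintype.sum_bool, chsh,
      corr_eq]
    cases s 0 0 <;> cases s 0 1 <;> cases s 1 0 <;> cases s 1 1 <;>
      simp [outVal] <;> linarith
  have hrep : ∀ a b x y, P a b x y = ∑ o, q o * Q o a b x y := by
    have hn := hP.2
    obtain ⟨hA, hB⟩ := hNS
    have hA' := fun a x => hA a x 0 1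
    have hB' := fun b y => hB b y 0 1
    simp only [Fintype.sum_option, Fintype.sum_prod_type, q, Q, Option.elim, chsh, corr_eq, prBox,
      detA, detB, pointMass]
    simp only [Fin.forall_fin_two, Bool.forall_bool, Fin.sum_univ_two, Fintype.sum_bool]
      at hn hA' hB' ⊢
    unfold OddSign at hs
    revert hs
    cases s 0 0 <;> cases s 0 1 <;> cases s 1 0 <;> cases s 1 1 <;>
      simp [outVal] <;> grind
  obtain ⟨w, hw, hle⟩ := exists_weight_of_decomposition (P := P) q
    (by
      rintro (_ | e)
      · simp only [q, Option.elim]; linarith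
      · exact hP.1 _ _ _ _)
    (by rw [Fintype.sum_option, hsum]; simp only [q, Option.elim]; ring) Q
    (by
      rintro (_ | e)
      · exact isBehaviour_prBox s
      · exact isBehaviour_of_isProduct (hprod e))
    hrep (fun o => o.isSome = true)
    (by
      rintro (_ | e) h
      · simp at h
      · exact hprod e) hp
  refine ⟨w, hw, ?_⟩
  rw [← hsum]
  simpa [Fintype.sum_option] using hle

/-- Two pairs of intervals contain points with the same sum, once the two intervals of possible
sums overlap. -/
lemma exists_common_sum {l u l' u' m v m' v' : ℝ} (h1 : l ≤ u) (h2 : l' ≤ u') (h3 : m ≤ v)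
    (h4 : m' ≤ v') (h5 : l + l' ≤ v + v') (h6 : m + m' ≤ u + u') :
    ∃ t t' r r', l ≤ t ∧ t ≤ u ∧ l' ≤ t' ∧ t' ≤ u' ∧ m ≤ r ∧ r ≤ v ∧ m' ≤ r' ∧ r' ≤ v' ∧
      t + t' = r + r' := by
  have split : ∀ {l u l' u' c : ℝ}, l ≤ u → l' ≤ u' → l + l' ≤ c → c ≤ u + u' →
      ∃ t t', l ≤ t ∧ t ≤ u ∧ l' ≤ t' ∧ t' ≤ u' ∧ t + t' = c := by
    intro l u l' u' c h1 h2 h3 h4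
    refine ⟨max l (c - u'), c - max l (c - u'), le_max_left _ _, max_le h1 (by linarith), ?_,
      ?_, by ring⟩
    · have : max l (c - u') ≤ c - l' := max_le (by linarith) (by linarith)
      linarith
    · linarith [le_max_right l (c - u')]
  obtain ⟨t, t', a1, a2, a3, a4, a5⟩ := split (c := max (l + l') (m + m')) h1 h2
    (le_max_left _ _) (max_le (by linarith) h6)
  obtain ⟨r, r', b1, b2, b3, b4, b5⟩ := split (c := max (l + l') (m + m')) h3 h4
    (le_max_right _ _) (max_le h5 (by linarith))
  exact ⟨t, t', r, r', a1, a2, a3, a4, b1, b2, b3, b4, by linarith⟩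

/-- For either setting of Alice there is a joint distribution of her outcome and both of Bob's
outcomes, and the two can be chosen with the same marginal on Bob's outcomes. -/
lemma exists_triples {P : Bool → Bool → Fin 2 → Fin 2 → ℝ}
    (hP : IsBehaviour P) (hNS : NonSignalling P) (hS : Smax P ≤ 2) :
    ∃ T : Fin 2 → Bool → Bool → Bool → ℝ, (∀ x a b c, 0 ≤ T x a b c) ∧
      (∀ b c, ∑ a, T 0 a b c = ∑ a, T 1 a b c) ∧
      (∀ x a b, ∑ c, T x a b c = P a b x 0) ∧ (∀ x a c, ∑ b, T x a b c = P a c x 1) := by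
  obtain ⟨hA, hB⟩ := hNS
  have hA' := fun a x => hA a x 0 1
  have hB' := fun b y => hB b y 0 1
  have hn := hP.2
  simp only [Fintype.sum_bool] at hA' hB' hn
  simp only [Smax, max_le_iff, abs_le, S1, S2, S3, S4, corr_eq] at hS
  obtain ⟨⟨⟨hS1, hT1⟩, hS2, hT2⟩, ⟨hS3, hT3⟩, hS4, hT4⟩ := hS
  -- The 2 × 2 table `T x a` has prescribed margins, so it is determined by its entry
  -- `T x a true true`, which ranges over the interval `[l a x, u a x]`.
  let l : Bool → Fin 2 → ℝ := fun a x => max 0 (P a true x 1 - P a false x 0)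
  let u : Bool → Fin 2 → ℝ := fun a x => min (P a true x 0) (P a true x 1)
  have hlu : ∀ a x, l a x ≤ u a x := by
    intro a x
    refine max_le (le_min (hP.1 _ _ _ _) (hP.1 _ _ _ _)) (le_min ?_ ?_)
    · linarith [hA' a x, hP.1 a false x 1]
    · linarith [hP.1 a false x 0]
  have hcross : l true 0 + l false 0 ≤ u true 1 + u false 1 ∧
      l true 1 + l false 1 ≤ u true 0 + u false 0 := by
    have e1 := hA' true 0
    have e2 := hA' true 1
    have e3 := hA' false 0
    have e4 := hA' false 1
    have f1 := hB' true 0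
    have f2 := hB' true 1
    have f3 := hB' false 0
    have f4 := hB' false 1
    have n1 := hn 0 0
    have n2 := hn 1 1
    have p := hP.1
    simp only [Fin.forall_fin_two, Bool.forall_bool] at p
    casesm* _ ∧ _
    simp only [l, u]
    constructor
    · rcases max_choice 0 (P true true 0 1 - P true false 0 0) with h | h <;>
      rcases max_choice 0 (P false true 0 1 - P false false 0 0) with k1 | k1 <;>
      rcases min_choice (P true true 1 0) (P true true 1 1) with k2 | k2 <;>
      rcases min_choice (P false true 1 0) (P false true 1 1) with k3 | k3 <;>
      rw [h, k1, k2, k3] <;> linarith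
    · rcases max_choice 0 (P true true 1 1 - P true false 1 0) with h | h <;>
      rcases max_choice 0 (P false true 1 1 - P false false 1 0) with k1 | k1 <;>
      rcases min_choice (P true true 0 0) (P true true 0 1) with k2 | k2 <;>
      rcases min_choice (P false true 0 0) (P false true 0 1) with k3 | k3 <;>
      rw [h, k1, k2, k3] <;> linarith
  obtain ⟨t, t', r, r', h1, h2, h3, h4, h5, h6, h7, h8, h9⟩ := exists_common_sum
    (hlu true 0) (hlu false 0) (hlu true 1) (hlu false 1) hcross.1 hcross.2
  obtain ⟨v, hv, hvs⟩ : ∃ v : Bool → Fin 2 → ℝ, (∀ a x, l a x ≤ v a x ∧ v a x ≤ u a x) ∧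
      v true 0 + v false 0 = v true 1 + v false 1 := by
    refine ⟨fun a => ![if a then t else t', if a then r else r'], ?_, by simpa using h9⟩
    simp [Fin.forall_fin_two, *]
  refine ⟨fun x a b c => if b then (if c then v a x else P a true x 0 - v a x)
    else (if c then P a true x 1 - v a x else P a false x 0 - P a true x 1 + v a x),
    ?_, ?_, ?_, ?_⟩
  · intro x a b c
    obtain ⟨hl, hu⟩ := hv a x
    simp only [l, u, max_le_iff, le_min_iff] at hl hu
    cases b <;> cases c <;> simp <;> linarith
  · intro b c
    cases b <;> cases c <;> simp <;>
      linarith [hB' true 0, hB' true 1, hB' false 0, hB' false 1]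
  · intro x a b
    cases b <;> simp
  · intro x a c
    cases c <;> simp
    linarith [hA' a x]

/-- Fine's theorem: conditioning Alice's outcomes on the pair of Bob's outcomes gives a local
model with that pair as hidden variable. -/
lemma exists_weight_local {P : Bool → Bool → Fin 2 → Fin 2 → ℝ}
    (hP : IsBehaviour P) (hNS : NonSignalling P) (hS : Smax P ≤ 2)
    {p : Fin 2 → Fin 2 → ℝ} (hp : IsSettingDist p) :
    ∃ w ∈ FHVLocalWeights 2 P p, 1 ≤ w := by
  obtain ⟨T, hT0, hTJ, hTb, hTc⟩ := exists_triples hP hNS hS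
  let J : Bool × Bool → ℝ := fun i => ∑ a, T 0 a i.1 i.2
  have hJ : ∀ i x, J i = ∑ a, T x a i.1 i.2 := by
    intro i x
    fin_cases x
    · rfl
    · exact hTJ _ _
  have hJ0 : ∀ i, 0 ≤ J i := fun i => Finset.sum_nonneg fun a _ => hT0 _ _ _ _
  have hJ1 : ∑ i, J i = 1 := by
    have h := hP.2 0 0
    simp only [← hTb, Fintype.sum_bool] at h
    simp only [J, Fintype.sum_prod_type, Fintype.sum_bool]
    linarith
  -- On a pair of probability zero Alice's response is irrelevant; a constant keeps it normalised.
  let α : Bool × Bool → Bool → Fin 2 → ℝ := fun i a x =>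
    if J i = 0 then 1 / 2 else T x a i.1 i.2 / J i
  have hα0 : ∀ i a x, 0 ≤ α i a x := by
    intro i a x
    simp only [α]
    split_ifs
    · norm_num
    · exact div_nonneg (hT0 _ _ _ _) (hJ0 _)
  have hα1 : ∀ i x, ∑ a, α i a x = 1 := by
    intro i x
    simp only [α]
    split_ifs with h
    · simp
    · rw [← Finset.sum_div, ← hJ, div_self h]
  have hαT : ∀ i a x, J i * α i a x = T x a i.1 i.2 := by
    intro i a x
    simp only [α]
    split_ifs with h
    · rw [hJ i x, Finset.sum_eq_zero_iff_of_nonneg fun a _ => hT0 _ _ _ _] at h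
      rw [h a (Finset.mem_univ a), hJ i x,
        Finset.sum_eq_zero fun a ha => h a ha, zero_mul]
    · field_simp
  let β : Bool × Bool → Bool → Fin 2 → ℝ := fun i b y => pointMass (if y = 0 then i.1 else i.2) b
  have hprod : ∀ i, IsProduct fun a b x y => α i a x * β i b y := fun i =>
    ⟨α i, β i, hα0 i, hα1 i, fun _ _ => pointMass_nonneg _ _, fun _ => sum_pointMass _,
      fun _ _ _ _ => rfl⟩
  have hrep : ∀ a b x y, P a b x y = ∑ i, J i * (α i a x * β i b y) := by
    intro a b x y
    simp only [← mul_assoc, hαT, Fintype.sum_prod_type]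
    fin_cases y
    · cases b <;> simp [β, pointMass, ← hTb]
    · cases b <;> simp [β, pointMass, ← hTc]
  obtain ⟨w, hw, hle⟩ := exists_weight_of_decomposition (P := P) J hJ0 hJ1
    (fun i a b x y => α i a x * β i b y) (fun i => isBehaviour_of_isProduct (hprod i)) hrep
    (fun _ => True) (fun i _ => hprod i) hp
  exact ⟨w, hw, by simpa [hJ1] using hle⟩

theorem muL_of_nonsignalling_CHSH (P : Bool → Bool → Fin 2 → Fin 2 → ℝ)
    (hP : IsBehaviour P) (hNS : NonSignalling P) :
    (2 < Smax P → muL 2 P = (4 - Smax P) / 2) ∧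
    (Smax P ≤ 2 → muL 2 P = 1) := by
  constructor
  · intro h
    obtain ⟨s, hs, hsP⟩ := Smax_eq_chsh P
    rw [← hsP] at h ⊢
    exact muL_eq_of (fun p N hN => localWeight_le hs N hN)
      fun p hp => exists_weight_nonlocal hP hNS hs h.le hp
  · intro h
    exact muL_eq_of (fun p N _ => localWeight_le_one N)
      fun p hp => exists_weight_local hP hNS h hp
end
end

section
/- For every non-signalling behaviour P with two settings x,y ∈ {0,1}, the measure of free choice satisfies μ_F(P) = (4 − S_max)/2 if S_max > 2, and μ_F(P) = 1 if S_max ≤ 2, where S_max is the maximal absolute value of the four CHSH expressions of P. -/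
/-!
For every setting distribution the largest free weight of an LHV model equals
`w = min 1 ((4 - Smax P) / 2)`, so the infimum over setting distributions is trivial.

*Upper bound.* In an LHV model a free point of weight `q` contributes at most `2 q` to a CHSH
expression (`chsh_le_two`), and a non-free point at most `∑ x y, q(l|x,y)`. Summing over all points,
every CHSH expression is at most `4 - 2 * freeWeight` (`chsh_le_of_LHV`).

*Lower bound.* Any nonnegative table is simulated by non-free points that output a constant pair
`(a, b)` and are drawn with a setting-dependent probability. Hence it suffices to find a local
sub-behaviour of `P` of total mass `w` (`exists_LHV_of_local_part`). If `Smax P ≤ 2` this is `P`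
itself; otherwise it is `P` minus the multiple `(Smax P - 2) / 2` of the PR box that maximises the
CHSH expression attaining `Smax P` (`exists_subbehaviour`). In both cases the (unnormalised)
table is nonnegative, non-signalling and satisfies all CHSH inequalities, so it is local by Fine's
theorem (`fine`): there are joint distributions of `(a_x, b_0, b_1)`, for `x = 0, 1`, with a common
marginal on `(b_0, b_1)`. The pair `(b_0, b_1)` then serves as the free hidden variable.
-/


open scoped BigOperators Classical
open Finset

noncomputable section

/-! ### The bound on the free weight -/

/-- The CHSH inequality for product correlators. -/
lemma chsh_le_two_s2 {u v u' v' : ℝ} (hu : |u| ≤ 1) (hu' : |u'| ≤ 1) (hv : |v| ≤ 1) (hv' : |v'| ≤ 1) :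
    u * v + u * v' + u' * v - u' * v' ≤ 2 := by
  have h1 : u * (v + v') ≤ |v + v'| := by
    calc u * (v + v') ≤ |u * (v + v')| := le_abs_self _
      _ = |u| * |v + v'| := abs_mul _ _
      _ ≤ 1 * |v + v'| := by gcongr
      _ = _ := one_mul _
  have h2 : u' * (v - v') ≤ |v - v'| := by
    calc u' * (v - v') ≤ |u' * (v - v')| := le_abs_self _
      _ = |u'| * |v - v'| := abs_mul _ _
      _ ≤ 1 * |v - v'| := by gcongr
      _ = _ := one_mul _
  have h3 : |v + v'| + |v - v'| ≤ 2 := by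
    rw [abs_le] at hv hv'
    rcases abs_cases (v + v') with h | h <;> rcases abs_cases (v - v') with h' | h' <;> linarith
  linarith

lemma corr_eq_sum {P : Bool → Bool → Fin 2 → Fin 2 → ℝ} {p : Fin 2 → Fin 2 → ℝ}
    (N : HVModel 2 P p) (x y : Fin 2) :
    corr P x y = ∑ l, corr (N.Pc l) x y * N.qc x y l := by
  simp only [corr, Fintype.sum_bool, N.reproduce, Finset.mul_sum, ← Finset.sum_add_distrib]
  exact Finset.sum_congr rfl fun l _ => by ring

/-- The marginal expectations of a local point factorise its correlators. -/
lemma local_corr {P : Bool → Bool → Fin 2 → Fin 2 → ℝ} {p : Fin 2 → Fin 2 → ℝ}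
    (N : HVModel 2 P p) {l : Fin N.n} (h : N.IsLocalPoint l) :
    ∃ u v : Fin 2 → ℝ, (∀ x, |u x| ≤ 1) ∧ (∀ y, |v y| ≤ 1) ∧
      ∀ x y, corr (N.Pc l) x y = u x * v y := by
  obtain ⟨α, β, hα, hα1, hβ, hβ1, hP⟩ := h
  refine ⟨fun x => α true x - α false x, fun y => β true y - β false y, ?_, ?_, ?_⟩
  · intro x
    have := hα1 x
    rw [Fintype.sum_bool] at this
    rw [abs_le]
    constructor <;> linarith [hα true x, hα false x]
  · intro y
    have := hβ1 y
    rw [Fintype.sum_bool] at this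
    rw [abs_le]
    constructor <;> linarith [hβ true y, hβ false y]
  · intro x y
    simp only [corr, Fintype.sum_bool, hP, outVal]
    norm_num
    ring

/-- A correlation expression with coefficients in `[-1, 1]` and local bound `2` is at most
`4 - 2 * freeWeight` in any LHV model. -/
lemma chsh_le_of_LHV {P : Bool → Bool → Fin 2 → Fin 2 → ℝ} {p : Fin 2 → Fin 2 → ℝ}
    (N : HVModel 2 P p) (hN : N.IsLHV) (s : Fin 2 → Fin 2 → ℝ) (hs : ∀ x y, |s x y| ≤ 1)
    (hloc : ∀ u v : Fin 2 → ℝ, (∀ x, |u x| ≤ 1) → (∀ y, |v y| ≤ 1) →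
      ∑ x, ∑ y, s x y * (u x * v y) ≤ 2) :
    ∑ x, ∑ y, s x y * corr P x y ≤ 4 - 2 * N.freeWeight := by
  have key : ∀ l, ∑ x, ∑ y, s x y * (corr (N.Pc l) x y * N.qc x y l) ≤
      ∑ x, ∑ y, N.qc x y l - 2 * (if N.IsFreePoint l then N.q l else 0) := by
    intro l
    obtain ⟨u, v, hu, hv, huv⟩ := local_corr N (hN l)
    split_ifs with hf
    · have h := hloc u v hu hv
      have hq := N.q_nonneg l
      have hf' : ∀ x y, N.qc x y l = N.q l := hf
      simp only [huv, hf', Fin.sum_univ_two] at h ⊢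
      nlinarith
    · rw [mul_zero, sub_zero]
      refine Finset.sum_le_sum fun x _ => Finset.sum_le_sum fun y _ => ?_
      have h1 : s x y * (u x * v y) ≤ 1 := by
        refine (le_abs_self _).trans ?_
        rw [abs_mul, abs_mul]
        have h2 : |u x| * |v y| ≤ 1 := mul_le_one₀ (hu x) (abs_nonneg _) (hv y)
        exact mul_le_one₀ (hs x y) (by positivity) h2
      rw [huv]
      nlinarith [N.qc_nonneg x y l]
  have hsum := Finset.sum_le_sum fun l (_ : l ∈ Finset.univ) => key l
  have e1 : ∑ x, ∑ y, s x y * corr P x y =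
      ∑ l, ∑ x, ∑ y, s x y * (corr (N.Pc l) x y * N.qc x y l) := by
    simp only [Fin.sum_univ_two, Finset.sum_add_distrib, corr_eq_sum N, Finset.mul_sum]
  have e2 : ∑ l, ∑ x, ∑ y, N.qc x y l = 4 := by
    simp only [Fin.sum_univ_two, Finset.sum_add_distrib, N.qc_sum]
    norm_num
  rw [Finset.sum_sub_distrib, e2, ← Finset.mul_sum, ← e1] at hsum
  exact hsum

lemma Smax_le_of_LHV {P : Bool → Bool → Fin 2 → Fin 2 → ℝ} {p : Fin 2 → Fin 2 → ℝ}
    (N : HVModel 2 P p) (hN : N.IsLHV) : Smax P ≤ 4 - 2 * N.freeWeight := by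
  have H := chsh_le_of_LHV N hN
  have h1 := H ![![1, 1], ![1, -1]] (by simp [Fin.forall_fin_two]) (fun u v hu hv => by
    have := chsh_le_two_s2 (hu 0) (hu 1) (hv 0) (hv 1); simp; linarith)
  have h2 := H ![![1, 1], ![-1, 1]] (by simp [Fin.forall_fin_two]) (fun u v hu hv => by
    have := chsh_le_two_s2 (hu 0) (hu 1) (hv 1) (hv 0); simp; linarith)
  have h3 := H ![![1, -1], ![1, 1]] (by simp [Fin.forall_fin_two]) (fun u v hu hv => by
    have := chsh_le_two_s2 (hu 1) (hu 0) (hv 0) (hv 1); simp; linarith)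
  have h4 := H ![![-1, 1], ![1, 1]] (by simp [Fin.forall_fin_two]) (fun u v hu hv => by
    have := chsh_le_two_s2 (hu 1) (hu 0) (hv 1) (hv 0); simp; linarith)
  -- The opposite signs follow from the same inequality applied to `-u`.
  have abs_neg_le : ∀ u : Fin 2 → ℝ, (∀ x, |u x| ≤ 1) → ∀ x, |-u x| ≤ 1 := fun u hu x => by
    rw [abs_neg]; exact hu x
  have h1' := H ![![-1, -1], ![-1, 1]] (by simp [Fin.forall_fin_two]) (fun u v hu hv => by
    have := chsh_le_two_s2 (abs_neg_le u hu 0) (abs_neg_le u hu 1) (hv 0) (hv 1); simp; linarith)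
  have h2' := H ![![-1, -1], ![1, -1]] (by simp [Fin.forall_fin_two]) (fun u v hu hv => by
    have := chsh_le_two_s2 (abs_neg_le u hu 0) (abs_neg_le u hu 1) (hv 1) (hv 0); simp; linarith)
  have h3' := H ![![-1, 1], ![-1, -1]] (by simp [Fin.forall_fin_two]) (fun u v hu hv => by
    have := chsh_le_two_s2 (abs_neg_le u hu 1) (abs_neg_le u hu 0) (hv 0) (hv 1); simp; linarith)
  have h4' := H ![![1, -1], ![-1, -1]] (by simp [Fin.forall_fin_two]) (fun u v hu hv => by
    have := chsh_le_two_s2 (abs_neg_le u hu 1) (abs_neg_le u hu 0) (hv 1) (hv 0); simp; linarith)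
  simp [Fin.sum_univ_two] at h1 h2 h3 h4 h1' h2' h3' h4'
  simp only [Smax, S1, S2, S3, S4]
  refine max_le (max_le ?_ ?_) (max_le ?_ ?_) <;> rw [abs_le] <;> constructor <;> linarith

lemma freeWeight_le_one {P : Bool → Bool → Fin 2 → Fin 2 → ℝ} {p : Fin 2 → Fin 2 → ℝ}
    (N : HVModel 2 P p) : N.freeWeight ≤ 1 := by
  rw [← N.q_sum]
  refine Finset.sum_le_sum fun l _ => ?_
  split_ifs
  · exact le_rfl
  · exact N.q_nonneg l

/-! ### Models from local sub-behaviours -/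

/-- The outcome of setting `y` in the response `(b₀, b₁)`. -/
def pick (y : Fin 2) (l : Bool × Bool) : Bool := if y = 0 then l.1 else l.2

/-- An HV model whose hidden-variable space is an arbitrary finite type. -/
def HVModel.ofFintype {Λ : Type} [Fintype Λ] {P : Bool → Bool → Fin 2 → Fin 2 → ℝ}
    {p : Fin 2 → Fin 2 → ℝ} (hp : IsSettingDist p) (qc : Fin 2 → Fin 2 → Λ → ℝ)
    (qc_nonneg : ∀ x y l, 0 ≤ qc x y l) (qc_sum : ∀ x y, ∑ l, qc x y l = 1)
    (Pc : Λ → Bool → Bool → Fin 2 → Fin 2 → ℝ) (Pc_nonneg : ∀ l a b x y, 0 ≤ Pc l a b x y)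
    (Pc_sum : ∀ l x y, ∑ a, ∑ b, Pc l a b x y = 1)
    (reproduce : ∀ a b x y, P a b x y = ∑ l, Pc l a b x y * qc x y l) : HVModel 2 P p where
  n := Fintype.card Λ
  q i := ∑ x, ∑ y, qc x y ((Fintype.equivFin Λ).symm i) * p x y
  q_nonneg i := Finset.sum_nonneg fun x _ => Finset.sum_nonneg fun y _ =>
    mul_nonneg (qc_nonneg _ _ _) (hp.1 x y).le
  q_sum := by
    rw [(Fintype.equivFin Λ).symm.sum_comp (fun l => ∑ x, ∑ y, qc x y l * p x y)]
    have h := hp.2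
    simp only [Fin.sum_univ_two, Finset.sum_add_distrib, ← Finset.sum_mul, qc_sum] at h ⊢
    linarith
  qc x y i := qc x y ((Fintype.equivFin Λ).symm i)
  qc_nonneg x y i := qc_nonneg _ _ _
  qc_sum x y := by rw [(Fintype.equivFin Λ).symm.sum_comp (fun l => qc x y l), qc_sum]
  q_marg i := rfl
  Pc i := Pc ((Fintype.equivFin Λ).symm i)
  Pc_nonneg i := Pc_nonneg _
  Pc_sum i := Pc_sum _
  reproduce a b x y := by
    rw [(Fintype.equivFin Λ).symm.sum_comp (fun l => Pc l a b x y * qc x y l), reproduce]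

/-- If `t x a (b₀, b₁)` are joint distributions of `(a_x, b₀, b₁)` with common marginal `r`, and the
local table they induce lies below `P`, then `P` has an LHV model of free weight at least `∑ r`:
the pairs `(b₀, b₁)` are free points, and the rest of `P` is simulated by constant outputs. -/
lemma exists_LHV_of_local_part {P : Bool → Bool → Fin 2 → Fin 2 → ℝ} (hP : IsBehaviour P)
    {p : Fin 2 → Fin 2 → ℝ} (hp : IsSettingDist p)
    (t : Fin 2 → Bool → Bool × Bool → ℝ) (r : Bool × Bool → ℝ)
    (ht : ∀ x a l, 0 ≤ t x a l) (htr : ∀ x l, ∑ a, t x a l = r l)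
    (hle : ∀ a b x y, ∑ l, (if pick y l = b then t x a l else 0) ≤ P a b x y) :
    ∃ N : HVModel 2 P p, N.IsLHV ∧ ∑ l, r l ≤ N.freeWeight := by
  have hr : ∀ l, 0 ≤ r l := fun l => by
    rw [← htr 0 l]; exact Finset.sum_nonneg fun a _ => ht 0 a l
  -- The response of Alice: `t / r`, replaced by a constant where `r` vanishes.
  let α : Bool × Bool → Bool → Fin 2 → ℝ := fun l a x =>
    if r l = 0 then (if a then 1 else 0) else t x a l / r l
  have hα : ∀ l a x, 0 ≤ α l a x := by
    intro l a x
    simp only [α]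
    split_ifs
    · norm_num
    · norm_num
    · exact div_nonneg (ht _ _ _) (hr _)
  have hα1 : ∀ l x, ∑ a, α l a x = 1 := by
    intro l x
    by_cases h : r l = 0
    · simp [α, h]
    · simp only [α, h, if_false]
      rw [← Finset.sum_div, htr, div_self h]
  have hαr : ∀ l a x, α l a x * r l = t x a l := by
    intro l a x
    by_cases h : r l = 0
    · have h1 := htr x l
      rw [h, Fintype.sum_bool] at h1
      have h2 : t x a l = 0 := by
        cases a <;> linarith [ht x true l, ht x false l]
      rw [h, h2, mul_zero]
    · simp only [α, h, if_false]
      field_simp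
  let β : Bool × Bool → Bool → Fin 2 → ℝ := fun l b y => if pick y l = b then 1 else 0
  have hβ : ∀ l b y, 0 ≤ β l b y := by
    intro l b y; simp only [β]; split_ifs <;> norm_num
  have hβ1 : ∀ l y, ∑ b, β l b y = 1 := by
    intro l y; simp [β]
  let δ : Bool → Bool → ℝ := fun a' a => if a' = a then 1 else 0
  have hδ : ∀ a' a, 0 ≤ δ a' a := by
    intro a' a; simp only [δ]; split_ifs <;> norm_num
  have hδ1 : ∀ a', ∑ a, δ a' a = 1 := by
    intro a'; simp [δ]
  let A : (Bool × Bool) ⊕ (Bool × Bool) → Bool → Fin 2 → ℝ := fun l a x =>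
    Sum.elim (fun l => α l a x) (fun o => δ o.1 a) l
  let B : (Bool × Bool) ⊕ (Bool × Bool) → Bool → Fin 2 → ℝ := fun l b y =>
    Sum.elim (fun l => β l b y) (fun o => δ o.2 b) l
  have hA : ∀ l a x, 0 ≤ A l a x := by
    rintro (l | o) a x
    · exact hα _ _ _
    · exact hδ _ _
  have hA1 : ∀ l x, ∑ a, A l a x = 1 := by
    rintro (l | o) x
    · exact hα1 _ _
    · exact hδ1 _
  have hB : ∀ l b y, 0 ≤ B l b y := by
    rintro (l | o) b y
    · exact hβ _ _ _
    · exact hδ _ _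
  have hB1 : ∀ l y, ∑ b, B l b y = 1 := by
    rintro (l | o) y
    · exact hβ1 _ _
    · exact hδ1 _
  let L : Bool → Bool → Fin 2 → Fin 2 → ℝ := fun a b x y =>
    ∑ l, (if pick y l = b then t x a l else 0)
  have hL : ∀ x y, ∑ a, ∑ b, L a b x y = ∑ l, r l := by
    intro x y
    have : ∀ a, ∑ b, L a b x y = ∑ l, t x a l := by
      intro a
      simp only [L]
      rw [Finset.sum_comm]
      exact Finset.sum_congr rfl fun l _ => by simp
    simp only [this]
    rw [Finset.sum_comm]
    exact Finset.sum_congr rfl fun l _ => htr x l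
  let qc : Fin 2 → Fin 2 → (Bool × Bool) ⊕ (Bool × Bool) → ℝ := fun x y =>
    Sum.elim r (fun o => P o.1 o.2 x y - L o.1 o.2 x y)
  let N : HVModel 2 P p := HVModel.ofFintype hp qc
    (by
      rintro x y (l | o)
      · exact hr l
      · exact sub_nonneg.2 (hle _ _ _ _))
    (by
      intro x y
      have h1 := hL x y
      have h2 := hP.2 x y
      simp only [qc, Fintype.sum_sum_type, Sum.elim_inl, Sum.elim_inr]
      rw [← h1]
      simp only [Fintype.sum_prod_type, Fintype.sum_bool] at h2 ⊢
      linarith)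
    (fun l a b x y => A l a x * B l b y)
    (fun l a b x y => mul_nonneg (hA _ _ _) (hB _ _ _))
    (by
      intro l x y
      simp only [← Finset.mul_sum, hB1, mul_one, hA1])
    (by
      intro a b x y
      simp only [qc, A, B, Fintype.sum_sum_type, Sum.elim_inl, Sum.elim_inr]
      have h1 : ∑ l, α l a x * β l b y * r l = L a b x y := by
        refine Finset.sum_congr rfl fun l _ => ?_
        rw [← hαr l a x]
        simp only [β]
        split_ifs <;> ring
      rw [h1]
      simp only [Fintype.sum_prod_type, Fintype.sum_bool, δ]
      cases a <;> cases b <;> simp)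
  refine ⟨N, ?_, ?_⟩
  · intro i
    let l := (Fintype.equivFin ((Bool × Bool) ⊕ (Bool × Bool))).symm i
    exact ⟨A l, B l, hA l, hA1 l, hB l, hB1 l, fun _ _ _ _ => rfl⟩
  · let e := Fintype.equivFin ((Bool × Bool) ⊕ (Bool × Bool))
    have hq : ∀ l, N.q (e (Sum.inl l)) = r l := by
      intro l
      have h := hp.2
      change ∑ x, ∑ y, qc x y (e.symm (e (Sum.inl l))) * p x y = r l
      simp only [Equiv.symm_apply_apply, qc, Sum.elim_inl, ← Finset.mul_sum, h, mul_one]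
    have hfree : ∀ l, N.IsFreePoint (e (Sum.inl l)) := by
      intro l x y
      rw [hq]
      change qc x y (e.symm (e (Sum.inl l))) = r l
      simp only [Equiv.symm_apply_apply, qc, Sum.elim_inl]
    have hsum : N.freeWeight =
        ∑ l, (if N.IsFreePoint (e l) then N.q (e l) else 0) :=
      (e.sum_comp (fun i => if N.IsFreePoint i then N.q i else 0)).symm
    rw [hsum, Fintype.sum_sum_type]
    simp only [hfree, hq, if_true]
    have : 0 ≤ ∑ o : Bool × Bool,
        (if N.IsFreePoint (e (Sum.inr o)) then N.q (e (Sum.inr o)) else 0) := by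
      refine Finset.sum_nonneg fun o _ => ?_
      split_ifs
      · exact N.q_nonneg _
      · exact le_rfl
    linarith

/-! ### Fine's theorem -/

/-- Cells of the table of total mass `w` for three binary variables `(a, b₀, b₁)` with
`P(a) = A`, `P(b_i) = B_i`, `P(a, b_i) = C_i`, `P(b₀, b₁) = β` and `P(a, b₀, b₁) = τ`. -/
def triCell (w A B0 B1 C0 C1 β τ : ℝ) : Bool → Bool × Bool → ℝ
  | true, (true, true) => τ
  | true, (true, false) => C0 - τ
  | true, (false, true) => C1 - τ
  | true, (false, false) => A - C0 - C1 + τ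
  | false, (true, true) => β - τ
  | false, (true, false) => B0 - C0 - β + τ
  | false, (false, true) => B1 - C1 - β + τ
  | false, (false, false) => w - A - B0 - B1 + C0 + C1 + β - τ

/-- The marginal of `triCell` on `(b₀, b₁)`. -/
def biCell (w B0 B1 β : ℝ) : Bool × Bool → ℝ
  | (true, true) => β
  | (true, false) => B0 - β
  | (false, true) => B1 - β
  | (false, false) => w - B0 - B1 + β

/-- Three compatible pairwise marginals extend to a triple distribution as soon as `β` lies in the
interval cut out by the triangle inequalities. -/
lemma exists_tau {w A B0 B1 C0 C1 β : ℝ}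
    (hC0 : 0 ≤ C0) (hC1 : 0 ≤ C1) (hA0 : C0 ≤ A) (hA1 : C1 ≤ A) (hB0 : C0 ≤ B0) (hB1 : C1 ≤ B1)
    (hw0 : A + B0 - C0 ≤ w) (hw1 : A + B1 - C1 ≤ w)
    (l1 : 0 ≤ β) (l2 : B0 + B1 - w ≤ β) (l3 : C0 + C1 - A ≤ β)
    (l4 : A + B0 + B1 - w - C0 - C1 ≤ β)
    (u1 : β ≤ B0) (u2 : β ≤ B1) (u3 : β ≤ B0 + C1 - C0) (u4 : β ≤ B1 + C0 - C1) :
    ∃ τ, ∀ a l, 0 ≤ triCell w A B0 B1 C0 C1 β τ a l := by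
  obtain ⟨τ, h1, h2⟩ : ∃ τ, (0 ≤ τ ∧ C0 + C1 - A ≤ τ ∧ C0 + β - B0 ≤ τ ∧ C1 + β - B1 ≤ τ) ∧
      (τ ≤ C0 ∧ τ ≤ C1 ∧ τ ≤ β ∧ τ ≤ w - A - B0 - B1 + C0 + C1 + β) := by
    refine ⟨max (max 0 (C0 + C1 - A)) (max (C0 + β - B0) (C1 + β - B1)), ?_, ?_⟩
    · simp only [le_max_iff, le_refl, true_or, or_true, and_self]
    · simp only [max_le_iff]
      refine ⟨⟨⟨?_, ?_⟩, ?_, ?_⟩, ⟨⟨?_, ?_⟩, ?_, ?_⟩, ⟨⟨?_, ?_⟩, ?_, ?_⟩, ⟨⟨?_, ?_⟩, ?_, ?_⟩⟩ <;>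
        linarith
  refine ⟨τ, ?_⟩
  rintro (_ | _) ⟨_ | _, _ | _⟩ <;> simp only [triCell] <;> linarith

/-- The probability of outcome `true` for Alice's setting `x`. -/
def mA (Q : Bool → Bool → Fin 2 → Fin 2 → ℝ) (x : Fin 2) : ℝ := Q true true x 0 + Q true false x 0

/-- The probability of outcome `true` for Bob's setting `y`. -/
def mB (Q : Bool → Bool → Fin 2 → Fin 2 → ℝ) (y : Fin 2) : ℝ := Q true true 0 y + Q false true 0 y

/-- Fine's theorem for tables of total mass `w`. -/
lemma fine {Q : Bool → Bool → Fin 2 → Fin 2 → ℝ} {w : ℝ} (hQ : ∀ a b x y, 0 ≤ Q a b x y)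
    (hw : ∀ x y, ∑ a, ∑ b, Q a b x y = w) (hNS : NonSignalling Q) (hS : Smax Q ≤ 2 * w) :
    ∃ (t : Fin 2 → Bool → Bool × Bool → ℝ) (r : Bool × Bool → ℝ),
      (∀ x a l, 0 ≤ t x a l) ∧ (∀ x l, ∑ a, t x a l = r l) ∧ (∑ l, r l = w) ∧
      (∀ a b x y, ∑ l, (if pick y l = b then t x a l else 0) = Q a b x y) := by
  -- Non-signalling expresses the whole table through `mA`, `mB` and `Q true true`.
  have e1 : ∀ x y, Q true false x y = mA Q x - Q true true x y := by
    intro x y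
    have := hNS.1 true x y 0
    simp only [Fintype.sum_bool] at this
    simp only [mA]; linarith
  have e2 : ∀ x y, Q false true x y = mB Q y - Q true true x y := by
    intro x y
    have := hNS.2 true y x 0
    simp only [Fintype.sum_bool] at this
    simp only [mB]; linarith
  have e3 : ∀ x y, Q false false x y = w - mA Q x - mB Q y + Q true true x y := by
    intro x y
    have := hw x y
    simp only [Fintype.sum_bool] at this
    linarith [e1 x y, e2 x y]
  have hc : ∀ x y, corr Q x y = 4 * Q true true x y - 2 * mA Q x - 2 * mB Q y + w := by
    intro x y
    simp only [corr, Fintype.sum_bool, outVal, e1, e2, e3]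
    norm_num
    ring
  have c0 : ∀ x y, 0 ≤ Q true true x y := fun x y => hQ _ _ x y
  have c1 : ∀ x y, Q true true x y ≤ mA Q x := fun x y => by
    linarith [hQ true false x y, e1 x y]
  have c2 : ∀ x y, Q true true x y ≤ mB Q y := fun x y => by
    linarith [hQ false true x y, e2 x y]
  have c3 : ∀ x y, mA Q x + mB Q y - Q true true x y ≤ w := fun x y => by
    linarith [hQ false false x y, e3 x y]
  simp only [Smax, S1, S2, S3, S4, max_le_iff, abs_le, hc] at hS
  obtain ⟨⟨⟨s1, s1'⟩, s2, s2'⟩, ⟨s3, s3'⟩, s4, s4'⟩ := hS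
  generalize hC : Q true true = C at *
  generalize mA Q = A at *
  generalize mB Q = B at *
  -- The lower bounds on `β` required by `exists_tau` for `x = 0, 1` stay below the upper ones:
  -- within one `x` by positivity, across the two `x` by the CHSH inequalities.
  obtain ⟨β, ⟨l1, l2, l3, l4⟩, ⟨u1, u2, u3, u4⟩⟩ : ∃ β,
      (0 ≤ β ∧ B 0 + B 1 - w ≤ β ∧ (∀ x, C x 0 + C x 1 - A x ≤ β) ∧
        (∀ x, A x + B 0 + B 1 - w - C x 0 - C x 1 ≤ β)) ∧
      (β ≤ B 0 ∧ β ≤ B 1 ∧ (∀ x, β ≤ B 0 + C x 1 - C x 0) ∧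
        (∀ x, β ≤ B 1 + C x 0 - C x 1)) := by
    simp only [Fin.forall_fin_two] at c0 c1 c2 c3 ⊢
    obtain ⟨⟨_, _⟩, _, _⟩ := c0
    obtain ⟨⟨_, _⟩, _, _⟩ := c1
    obtain ⟨⟨_, _⟩, _, _⟩ := c2
    obtain ⟨⟨_, _⟩, _, _⟩ := c3
    refine ⟨max (max 0 (B 0 + B 1 - w))
      (max (max (C 0 0 + C 0 1 - A 0) (C 1 0 + C 1 1 - A 1))
        (max (A 0 + B 0 + B 1 - w - C 0 0 - C 0 1) (A 1 + B 0 + B 1 - w - C 1 0 - C 1 1))), ?_, ?_⟩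
    · simp only [le_max_iff, le_refl, true_or, or_true, and_self]
    · simp only [max_le_iff]
      refine ⟨?_, ?_, ⟨?_, ?_⟩, ?_, ?_⟩ <;>
        refine ⟨⟨?_, ?_⟩, ⟨?_, ?_⟩, ?_, ?_⟩ <;> linarith
  have hτ : ∀ x, ∃ τ, ∀ a l, 0 ≤ triCell w (A x) (B 0) (B 1) (C x 0) (C x 1) β τ a l := fun x =>
    exists_tau (c0 x 0) (c0 x 1) (c1 x 0) (c1 x 1) (c2 x 0) (c2 x 1) (c3 x 0) (c3 x 1)
      l1 l2 (l3 x) (l4 x) u1 u2 (u3 x) (u4 x)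
  choose τ hτ using hτ
  refine ⟨fun x => triCell w (A x) (B 0) (B 1) (C x 0) (C x 1) β (τ x), biCell w (B 0) (B 1) β,
    hτ, ?_, ?_, ?_⟩
  · rintro x ⟨_ | _, _ | _⟩ <;> simp only [Fintype.sum_bool, triCell, biCell] <;> ring
  · simp only [Fintype.sum_prod_type, Fintype.sum_bool, biCell]; ring
  · rintro (_ | _) (_ | _) x y <;> fin_cases y <;>
      simp [Fintype.sum_prod_type, pick, triCell, e1, e2, e3, hC] <;> ring

/-! ### Subtracting the PR box -/

set_option maxHeartbeats 2000000 in
/-- If a CHSH expression (a sign pattern `s` of product `-1`) exceeds `2`, subtracting the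
corresponding PR box with weight `(S - 2) / 2` leaves a nonnegative non-signalling table of mass
`(4 - S) / 2` that satisfies all CHSH inequalities. -/
lemma exists_subbehaviour_of_sign {P : Bool → Bool → Fin 2 → Fin 2 → ℝ} (hP : IsBehaviour P)
    (hNS : NonSignalling P) (s : Fin 2 → Fin 2 → ℝ) (hs : ∀ x y, s x y = 1 ∨ s x y = -1)
    (hprod : s 0 0 * s 0 1 * s 1 0 * s 1 1 = -1)
    {S : ℝ} (hS : S = ∑ x, ∑ y, s x y * corr P x y) (h2 : 2 < S) :
    ∃ Q : Bool → Bool → Fin 2 → Fin 2 → ℝ, (∀ a b x y, Q a b x y ≤ P a b x y) ∧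
      (∀ a b x y, 0 ≤ Q a b x y) ∧ (∀ x y, ∑ a, ∑ b, Q a b x y = (4 - S) / 2) ∧
      NonSignalling Q ∧ Smax Q ≤ 2 * ((4 - S) / 2) := by
  obtain ⟨hpos, hone⟩ := hP
  have hcorr : ∀ x y, corr P x y = 1 - 2 * (P true false x y + P false true x y) := by
    intro x y
    have := hone x y
    simp only [Fintype.sum_bool] at this
    simp only [corr, Fintype.sum_bool, outVal]
    norm_num
    linarith
  refine ⟨fun a b x y => P a b x y - (S - 2) / 8 * (1 + s x y * (outVal a * outVal b)),
    ?_, ?_, ?_, ?_, ?_⟩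
  · intro a b x y
    have : 0 ≤ 1 + s x y * (outVal a * outVal b) := by
      rcases hs x y with h | h <;> rw [h] <;> cases a <;> cases b <;> norm_num [outVal]
    nlinarith
  · -- On the losing events of the PR box nothing is subtracted; a winning event exceeds `(S - 2) / 4`
    -- by the sum of three losing probabilities, by non-signalling.
    have nA : ∀ a x, P a true x 0 + P a false x 0 = P a true x 1 + P a false x 1 := fun a x => by
      simpa only [Fintype.sum_bool] using hNS.1 a x 0 1
    have nB : ∀ b y, P true b 0 y + P false b 0 y = P true b 1 y + P false b 1 y := fun b y => by
      simpa only [Fintype.sum_bool] using hNS.2 b y 0 1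
    have hone' : ∀ x y,
        P true true x y + P true false x y + (P false true x y + P false false x y) = 1 :=
      fun x y => by simpa only [Fintype.sum_bool] using hone x y
    simp only [Fin.sum_univ_two, hcorr] at hS
    simp only [Bool.forall_bool, Fin.forall_fin_two] at hs hpos nA nB hone' ⊢
    obtain ⟨⟨⟨⟨_, _⟩, _, _⟩, ⟨_, _⟩, _, _⟩, ⟨⟨_, _⟩, _, _⟩, ⟨_, _⟩, _, _⟩ := hpos
    obtain ⟨⟨_, _⟩, _, _⟩ := nA
    obtain ⟨⟨_, _⟩, _, _⟩ := nB
    obtain ⟨⟨_, _⟩, _, _⟩ := hone'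
    obtain ⟨⟨h00 | h00, h01 | h01⟩, h10 | h10, h11 | h11⟩ := hs <;>
      simp only [h00, h01, h10, h11] at hprod hS ⊢ <;> norm_num at hprod <;>
      norm_num [outVal] <;>
      refine ⟨⟨⟨⟨?_, ?_⟩, ?_, ?_⟩, ⟨?_, ?_⟩, ?_, ?_⟩, ⟨⟨?_, ?_⟩, ?_, ?_⟩, ⟨?_, ?_⟩, ?_, ?_⟩ <;>
      linarith
  · intro x y
    have := hone x y
    simp only [Fintype.sum_bool, outVal] at this ⊢
    norm_num
    linarith
  · constructor
    · intro a x y y'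
      have := hNS.1 a x y y'
      simp only [Fintype.sum_bool, outVal] at this ⊢
      norm_num
      linarith
    · intro b y x x'
      have := hNS.2 b y x x'
      simp only [Fintype.sum_bool, outVal] at this ⊢
      cases b <;> norm_num <;> linarith
  · have hQ : ∀ x y, corr (fun a b x y =>
        P a b x y - (S - 2) / 8 * (1 + s x y * (outVal a * outVal b))) x y =
        corr P x y - (S - 2) / 2 * s x y := by
      intro x y
      simp only [corr, Fintype.sum_bool, outVal]
      norm_num
      ring
    have hb : ∀ x y, -1 ≤ corr P x y ∧ corr P x y ≤ 1 := by
      intro x y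
      have := hone x y
      simp only [Fintype.sum_bool] at this
      rw [hcorr]
      constructor <;> linarith [hpos true true x y, hpos true false x y, hpos false true x y,
        hpos false false x y]
    simp only [Fin.sum_univ_two] at hS
    simp only [Fin.forall_fin_two] at hs hb
    obtain ⟨⟨⟨_, _⟩, _, _⟩, ⟨_, _⟩, _, _⟩ := hb
    simp only [Smax, S1, S2, S3, S4, max_le_iff, abs_le, hQ]
    obtain ⟨⟨h00 | h00, h01 | h01⟩, h10 | h10, h11 | h11⟩ := hs <;>
      simp only [h00, h01, h10, h11] at hprod hS ⊢ <;> norm_num at hprod <;>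
      refine ⟨⟨⟨?_, ?_⟩, ?_, ?_⟩, ⟨?_, ?_⟩, ?_, ?_⟩ <;> linarith

lemma exists_subbehaviour {P : Bool → Bool → Fin 2 → Fin 2 → ℝ} (hP : IsBehaviour P)
    (hNS : NonSignalling P) :
    ∃ Q : Bool → Bool → Fin 2 → Fin 2 → ℝ, (∀ a b x y, Q a b x y ≤ P a b x y) ∧
      (∀ a b x y, 0 ≤ Q a b x y) ∧
      (∀ x y, ∑ a, ∑ b, Q a b x y = min 1 ((4 - Smax P) / 2)) ∧
      NonSignalling Q ∧ Smax Q ≤ 2 * min 1 ((4 - Smax P) / 2) := by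
  rcases le_or_gt (Smax P) 2 with h | h
  · rw [min_eq_left (by linarith)]
    exact ⟨P, fun _ _ _ _ => le_rfl, hP.1, hP.2, hNS, by linarith⟩
  · rw [min_eq_right (by linarith)]
    obtain ⟨s, hs, hprod, hS⟩ : ∃ s : Fin 2 → Fin 2 → ℝ, (∀ x y, s x y = 1 ∨ s x y = -1) ∧
        s 0 0 * s 0 1 * s 1 0 * s 1 1 = -1 ∧ Smax P = ∑ x, ∑ y, s x y * corr P x y := by
      have hcases : ∀ T : ℝ, Smax P = |T| → Smax P = T ∨ Smax P = -T := fun T hT => by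
        rcases abs_choice T with h' | h' <;> rw [hT, h'] <;> simp
      have hmax : Smax P = |S1 P| ∨ Smax P = |S2 P| ∨ Smax P = |S3 P| ∨ Smax P = |S4 P| := by
        rw [Smax]
        rcases max_choice (max |S1 P| |S2 P|) (max |S3 P| |S4 P|) with e | e <;> rw [e]
        · rcases max_choice |S1 P| |S2 P| with e | e <;> rw [e] <;> simp
        · rcases max_choice |S3 P| |S4 P| with e | e <;> rw [e] <;> simp
      rcases hmax with e | e | e | e <;> rcases hcases _ e with e | e
      · refine ⟨![![1, 1], ![1, -1]], by simp [Fin.forall_fin_two], by simp, ?_⟩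
        rw [e, S1]; simp; ring
      · refine ⟨![![-1, -1], ![-1, 1]], by simp [Fin.forall_fin_two], by simp, ?_⟩
        rw [e, S1]; simp; ring
      · refine ⟨![![1, 1], ![-1, 1]], by simp [Fin.forall_fin_two], by simp, ?_⟩
        rw [e, S2]; simp; ring
      · refine ⟨![![-1, -1], ![1, -1]], by simp [Fin.forall_fin_two], by simp, ?_⟩
        rw [e, S2]; simp; ring
      · refine ⟨![![1, -1], ![1, 1]], by simp [Fin.forall_fin_two], by simp, ?_⟩
        rw [e, S3]; simp; ring
      · refine ⟨![![-1, 1], ![-1, -1]], by simp [Fin.forall_fin_two], by simp, ?_⟩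
        rw [e, S3]; simp; ring
      · refine ⟨![![-1, 1], ![1, 1]], by simp [Fin.forall_fin_two], by simp, ?_⟩
        rw [e, S4]; simp; ring
      · refine ⟨![![1, -1], ![-1, -1]], by simp [Fin.forall_fin_two], by simp, ?_⟩
        rw [e, S4]; simp; ring
    exact exists_subbehaviour_of_sign hP hNS s hs hprod hS h

/-! ### The measure of free choice -/

lemma sSup_LHVFreeWeights {P : Bool → Bool → Fin 2 → Fin 2 → ℝ} (hP : IsBehaviour P)
    (hNS : NonSignalling P) {p : Fin 2 → Fin 2 → ℝ} (hp : IsSettingDist p) :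
    sSup (LHVFreeWeights 2 P p) = min 1 ((4 - Smax P) / 2) := by
  have hub : ∀ N : HVModel 2 P p, N.IsLHV → N.freeWeight ≤ min 1 ((4 - Smax P) / 2) :=
    fun N hN => le_min (freeWeight_le_one N) (by linarith [Smax_le_of_LHV N hN])
  obtain ⟨Q, hQP, hQ, hQw, hQNS, hQS⟩ := exists_subbehaviour hP hNS
  obtain ⟨t, r, ht, htr, hr, htQ⟩ := fine hQ hQw hQNS hQS
  obtain ⟨N, hN, hle⟩ := exists_LHV_of_local_part hP hp t r ht htr
    (fun a b x y => (htQ a b x y).trans_le (hQP a b x y))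
  refine IsGreatest.csSup_eq ⟨⟨N, hN, ?_⟩, ?_⟩
  · exact le_antisymm (hr ▸ hle) (hub N hN)
  · rintro _ ⟨N', hN', rfl⟩
    exact hub N' hN'

lemma muF_eq_min {P : Bool → Bool → Fin 2 → Fin 2 → ℝ} (hP : IsBehaviour P)
    (hNS : NonSignalling P) : muF 2 P = min 1 ((4 - Smax P) / 2) := by
  have : Nonempty {f : Fin 2 → Fin 2 → ℝ // IsSettingDist f} :=
    ⟨⟨fun _ _ => 1 / 4, fun _ _ => by norm_num, by norm_num⟩⟩
  rw [muF]
  simp only [fun sp : {f : Fin 2 → Fin 2 → ℝ // IsSettingDist f} =>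
    sSup_LHVFreeWeights hP hNS sp.2]
  exact ciInf_const

theorem muF_of_nonsignalling_CHSH (P : Bool → Bool → Fin 2 → Fin 2 → ℝ)
    (hP : IsBehaviour P) (hNS : NonSignalling P) :
    (2 < Smax P → muF 2 P = (4 - Smax P) / 2) ∧
    (Smax P ≤ 2 → muF 2 P = 1) := by
  rw [muF_eq_min hP hNS]
  exact ⟨fun h => min_eq_right (by linarith), fun h => min_eq_left (by linarith)⟩
end
end

section
/- Fix θ ∈ [0, π/2] and finite families of unit vectors u_1,…,u_M and v_1,…,v_N in ℝ³. Define the behaviour P(a,b|x,y) = (1/4)·(1 + a·cosθ·(u_x)_3 + b·cosθ·(v_y)_3 + a·b·[(u_x)_3·(v_y)_3 + sinθ·((u_x)_1·(v_y)_1 − (u_x)_2·(v_y)_2)]) for a,b ∈ {−1,+1}, x ∈ {1,…,M}, y ∈ {1,…,N} (the quantum statistics of the pure two-qubit state cos(θ/2)|00⟩ + sin(θ/2)|11⟩ under projective spin measurements along u_x and v_y; these are valid probabilities). Then there exist a behaviour P_L admitting an LHV+FHV model and a behaviour Q such that P = cosθ·P_L + (1−cosθ)·Q pointwise; consequently the local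 fraction and free fraction of P are at least cos θ. -/
/-!
The local part is an explicit hidden-variable model.  Write `c = cos θ`, `s = sin θ`, `e₃` for the
third basis vector and `w_v = (s v₁, -s v₂, v₃)`, so that the quantum correlation is
`C(u,v) = ⟪u, w_v⟫`.  The hidden variable is a point `g` of the unit ball of `ℝ³` with density
proportional to `|g₃|`.  Alice answers `sgn (u·g) sgn g₃`, and Bob answers at random with mean
`sgn g₃ · clamp (w_v·g) / (c |g₃|)`, where the clamp is to the interval `[-c |g₃|, c |g₃|]`; this
mean equals `(|w_v·g + c g₃| - |w_v·g - c g₃|) / (2 c |g₃|)`.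

Rotation invariance gives, with `K = ∫ |g₃|`,
`∫ |w·g| = K ‖w‖` (`integral_abs_inner`) and `∫ sgn(u·g) (w·g) = K ⟪u, w⟫` for unit `u`
(`integral_sgn_inner`).  Since `‖w_v ± c e₃‖ = 1 ± c v₃`, the marginals of the model are `u₃` and
`v₃`.  Its correlation `E` satisfies `|C - c E| ≤ 1 - c`: without the clamp, `c E` would be exactly
`C`, and the clamp costs at most `K⁻¹ ∫ (max(|w_v·g|, c |g₃|) - c |g₃|)`, which is `1 - c` because
`max(|y|,|t|) = (|y+t| + |y-t|)/2`.  Hence `P - c P_L` is `1 - c` times a behaviour with unbiased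
marginals and correlation `(C - c E)/(1 - c)`.

As there are finitely many settings, a continuous hidden variable can be replaced by the finite set
of deterministic strategies (`localFree_of_integral`).
-/

open scoped BigOperators Classical
open Finset

noncomputable section

/-- A behaviour admits an LHV+FHV model (is local-free). -/
def LocalFree {M N : ℕ} (P : Bool → Bool → Fin M → Fin N → ℝ) : Prop :=
  ∃ (n : ℕ) (q : Fin n → ℝ) (A : Bool → Fin M → Fin n → ℝ) (B : Bool → Fin N → Fin n → ℝ),
    (∀ l, 0 ≤ q l) ∧ (∑ l, q l = 1) ∧
    (∀ a x l, 0 ≤ A a x l) ∧ (∀ x l, ∑ a, A a x l = 1) ∧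
    (∀ b y l, 0 ≤ B b y l) ∧ (∀ y l, ∑ b, B b y l = 1) ∧
    (∀ a b x y, P a b x y = ∑ l, q l * A a x l * B b y l)

/-- The quantum behaviour of the pure two-qubit state `cos(θ/2)|00⟩ + sin(θ/2)|11⟩`
under projective spin measurements along unit vectors `u x` and `v y`. -/
def qBehaviour {M N : ℕ} (θ : ℝ) (u : Fin M → EuclideanSpace ℝ (Fin 3))
    (v : Fin N → EuclideanSpace ℝ (Fin 3)) : Bool → Bool → Fin M → Fin N → ℝ :=
  fun a b x y => (1 / 4) *
    (1 + outVal a * Real.cos θ * u x 2 + outVal b * Real.cos θ * v y 2 +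
      outVal a * outVal b *
        (u x 2 * v y 2 + Real.sin θ * (u x 0 * v y 0 - u x 1 * v y 1)))

open MeasureTheory

/-! ### Finite models from continuous hidden variables -/

/-- The probability of outcome `a` for a two-valued response of mean `t`. -/
def resp (t : ℝ) (a : Bool) : ℝ := (1 + outVal a * t) / 2

lemma resp_nonneg {t : ℝ} (ht : |t| ≤ 1) (a : Bool) : 0 ≤ resp t a := by
  have := abs_le.1 ht
  cases a <;> simp [resp, outVal] <;> linarith

lemma resp_le_one {t : ℝ} (ht : |t| ≤ 1) (a : Bool) : resp t a ≤ 1 := by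
  have := abs_le.1 ht
  cases a <;> simp [resp, outVal] <;> linarith

lemma sum_resp (t : ℝ) : ∑ a, resp t a = 1 := by
  simp [resp, outVal]; ring

/-- Under independent responses at all settings, the total weight of the deterministic strategies
answering `a` at setting `x` is the response probability of `a` at `x`. -/
lemma sum_strategies {M : ℕ} (f : Fin M → ℝ) (a : Bool) (x : Fin M) :
    ∑ α : Fin M → Bool, (∏ i, resp (f i) (α i)) * (if α x = a then 1 else 0) = resp (f x) a := by
  have h1 : ∀ α : Fin M → Bool, (∏ i, resp (f i) (α i)) * (if α x = a then (1 : ℝ) else 0)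
      = ∏ i, resp (f i) (α i) * (if i = x then (if α i = a then 1 else 0) else 1) := by
    intro α
    rw [Finset.prod_mul_distrib, Finset.prod_ite_eq' Finset.univ x]
    simp
  simp_rw [h1]
  rw [← Fintype.prod_sum (fun i b => resp (f i) b * (if i = x then (if b = a then 1 else 0) else 1))]
  rw [Finset.prod_eq_single x]
  · simp
  · intro i _ hi
    simp only [hi, if_false, mul_one]
    exact sum_resp _
  · simp

/-- A mixture, over an arbitrary measure with density `ρ`, of independent local responses is
local-free: the finite hidden variable is the pair of deterministic strategies of the parties. -/
lemma localFree_of_integral {Ω : Type*} [MeasurableSpace Ω] (μ : Measure Ω) {M N : ℕ}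
    (ρ : Ω → ℝ) (f : Fin M → Ω → ℝ) (h : Fin N → Ω → ℝ)
    (hρ : ∀ g, 0 ≤ ρ g) (hρi : Integrable ρ μ) (hρ1 : ∫ g, ρ g ∂μ = 1)
    (hf : ∀ x, Measurable (f x)) (hh : ∀ y, Measurable (h y))
    (hf1 : ∀ x g, |f x g| ≤ 1) (hh1 : ∀ y g, |h y g| ≤ 1) :
    LocalFree (fun a b x y => ∫ g, ρ g * resp (f x g) a * resp (h y g) b ∂μ) := by
  let S := (Fin M → Bool) × (Fin N → Bool)
  let W : S → Ω → ℝ := fun σ g => ρ g * ((∏ i, resp (f i g) (σ.1 i)) * ∏ j, resp (h j g) (σ.2 j))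
  have hWi : ∀ σ, Integrable (W σ) μ := by
    intro σ
    refine hρi.mul_bdd (c := 1) ?_ ?_
    · refine Measurable.aestronglyMeasurable ?_
      unfold resp
      fun_prop
    · refine Filter.Eventually.of_forall fun g => ?_
      have hA0 : 0 ≤ ∏ i, resp (f i g) (σ.1 i) :=
        Finset.prod_nonneg fun i _ => resp_nonneg (hf1 i g) _
      have hB0 : 0 ≤ ∏ j, resp (h j g) (σ.2 j) :=
        Finset.prod_nonneg fun i _ => resp_nonneg (hh1 i g) _
      have hA1 : ∏ i, resp (f i g) (σ.1 i) ≤ 1 :=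
        Finset.prod_le_one (fun i _ => resp_nonneg (hf1 i g) _) fun i _ => resp_le_one (hf1 i g) _
      have hB1 : ∏ j, resp (h j g) (σ.2 j) ≤ 1 :=
        Finset.prod_le_one (fun i _ => resp_nonneg (hh1 i g) _) fun i _ => resp_le_one (hh1 i g) _
      rw [Real.norm_eq_abs, abs_of_nonneg (mul_nonneg hA0 hB0)]
      exact mul_le_one₀ hA1 hB0 hB1
  have key : ∀ a b x y, ∫ g, ρ g * resp (f x g) a * resp (h y g) b ∂μ =
      ∑ σ : S, (∫ g, W σ g ∂μ) * (if σ.1 x = a then 1 else 0) * (if σ.2 y = b then 1 else 0) := by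
    intro a b x y
    simp_rw [mul_assoc, ← integral_mul_const]
    rw [← integral_finsetSum _ fun σ _ => (hWi σ).mul_const _]
    refine integral_congr_ae (Filter.Eventually.of_forall fun g => ?_)
    simp only
    rw [← sum_strategies (fun i => f i g) a x, ← sum_strategies (fun j => h j g) b y,
      Finset.sum_mul_sum, ← Finset.univ_product_univ, Finset.sum_product, Finset.mul_sum]
    refine Finset.sum_congr rfl fun α _ => ?_
    rw [Finset.mul_sum]
    refine Finset.sum_congr rfl fun β _ => ?_
    simp only [W]
    ring
  have tot : ∑ σ : S, ∫ g, W σ g ∂μ = 1 := by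
    rw [← integral_finsetSum _ fun σ _ => hWi σ, ← hρ1]
    refine integral_congr_ae (Filter.Eventually.of_forall fun g => ?_)
    simp only [W]
    rw [← Finset.mul_sum, ← Finset.univ_product_univ, Finset.sum_product]
    simp only
    rw [← Finset.sum_mul_sum,
      ← Fintype.prod_sum (fun i b => resp (f i g) b), ← Fintype.prod_sum (fun j b => resp (h j g) b)]
    simp only [sum_resp, Finset.prod_const_one, mul_one]
  let e := Fintype.equivFin S
  refine ⟨Fintype.card S, fun l => ∫ g, W (e.symm l) g ∂μ,
    fun a x l => if (e.symm l).1 x = a then 1 else 0,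
    fun b y l => if (e.symm l).2 y = b then 1 else 0, ?_, ?_, ?_, ?_, ?_, ?_, ?_⟩
  · intro l
    refine integral_nonneg fun g => mul_nonneg (hρ g) (mul_nonneg ?_ ?_)
    · exact Finset.prod_nonneg fun i _ => resp_nonneg (hf1 i g) _
    · exact Finset.prod_nonneg fun i _ => resp_nonneg (hh1 i g) _
  · rw [← tot]
    exact e.symm.sum_comp (fun σ => ∫ g, W σ g ∂μ)
  · intro a x l
    positivity
  · intro x l
    simp
  · intro a x l
    positivity
  · intro x l
    simp
  · intro a b x y
    simp only [key]
    exact (e.symm.sum_comp (fun σ : S => (∫ g, W σ g ∂μ) * (if σ.1 x = a then (1 : ℝ) else 0) *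
      (if σ.2 y = b then 1 else 0))).symm

lemma LocalFree.isBehaviour {M N : ℕ} {P : Bool → Bool → Fin M → Fin N → ℝ} (hP : LocalFree P) :
    IsBehaviour P := by
  obtain ⟨n, q, A, B, hq, hq1, hA, hA1, hB, hB1, h⟩ := hP
  refine ⟨fun a b x y => ?_, fun x y => ?_⟩
  · rw [h]
    exact Finset.sum_nonneg fun l _ => mul_nonneg (mul_nonneg (hq l) (hA a x l)) (hB b y l)
  · simp_rw [h]
    have h1 : ∀ a, ∑ b, ∑ l, q l * A a x l * B b y l = ∑ l, q l * A a x l := by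
      intro a
      rw [Finset.sum_comm]
      refine Finset.sum_congr rfl fun l _ => ?_
      rw [← Finset.mul_sum, hB1, mul_one]
    simp_rw [h1]
    rw [Finset.sum_comm, ← hq1]
    refine Finset.sum_congr rfl fun l _ => ?_
    rw [← Finset.mul_sum, hA1, mul_one]

/-! ### Rotation-invariant integrals -/

/-- The space `ℝ³`. -/
abbrev E3 := EuclideanSpace ℝ (Fin 3)

/-- Lebesgue measure on the unit ball of `ℝ³`. -/
def ballMeasure : Measure E3 := volume.restrict (Metric.ball 0 1)

/-- The third basis vector. -/
def e3 : E3 := EuclideanSpace.single 2 1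

/-- The sign function, with value `0` at `0`. -/
def sgn (t : ℝ) : ℝ := t / |t|

lemma measurable_sgn : Measurable sgn := by
  unfold sgn; fun_prop

lemma abs_sgn_le (t : ℝ) : |sgn t| ≤ 1 := by
  rw [sgn, abs_div, abs_abs]
  exact div_self_le_one _

lemma sgn_mul_self (t : ℝ) : sgn t * t = |t| := by
  rcases eq_or_ne t 0 with rfl | h
  · simp
  · rw [sgn, div_mul_eq_mul_div, ← abs_mul_abs_self, mul_div_assoc, div_self (abs_ne_zero.2 h),
      mul_one]

lemma abs_mul_sgn (t : ℝ) : |t| * sgn t = t := by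
  rcases eq_or_ne t 0 with rfl | h
  · simp
  · rw [sgn, mul_div_cancel₀ _ (abs_ne_zero.2 h)]

lemma measurePreserving_ball (L : E3 ≃ₗᵢ[ℝ] E3) : MeasurePreserving L ballMeasure ballMeasure := by
  have h := L.measurePreserving.restrict_preimage_emb
    L.toHomeomorph.measurableEmbedding (Metric.ball (0 : E3) 1)
  have h2 : L ⁻¹' Metric.ball (0 : E3) 1 = Metric.ball 0 1 := by
    ext g; simp
  rw [h2] at h
  exact h

lemma integral_comp_isometry (L : E3 ≃ₗᵢ[ℝ] E3) (F : E3 → ℝ) :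
    ∫ g, F (L g) ∂ballMeasure = ∫ g, F g ∂ballMeasure :=
  (measurePreserving_ball L).integral_comp L.toHomeomorph.measurableEmbedding F

lemma integrable_inner (w : E3) : Integrable (fun g : E3 => inner ℝ w g) ballMeasure := by
  have : IsFiniteMeasure ballMeasure := by
    unfold ballMeasure
    exact isFiniteMeasure_restrict.2 measure_ball_lt_top.ne
  refine Integrable.of_bound (C := ‖w‖) (by fun_prop) ?_
  unfold ballMeasure
  refine (ae_restrict_iff' measurableSet_ball).2 (Filter.Eventually.of_forall fun g hg => ?_)
  have hg1 : ‖g‖ ≤ 1 := by simpa using (le_of_lt (by simpa using hg) : ‖g‖ ≤ 1)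
  calc ‖inner ℝ w g‖ ≤ ‖w‖ * ‖g‖ := norm_inner_le_norm w g
    _ ≤ ‖w‖ := mul_le_of_le_one_right (norm_nonneg _) hg1

/-- The normalization constant `∫ |g₃|` over the unit ball. -/
def ballConst : ℝ := ∫ g, |inner ℝ e3 g| ∂ballMeasure

lemma norm_e3 : ‖e3‖ = 1 := by simp [e3]

lemma inner_reflection (V : Submodule ℝ E3) (w g : E3) :
    inner ℝ w (V.reflection g) = inner ℝ (V.reflection w) g := by
  rw [← LinearIsometryEquiv.inner_map_map V.reflection w, Submodule.reflection_reflection]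

/-- Two vectors of equal norm are exchanged by a reflection, which preserves the measure. -/
lemma integral_abs_inner (w : E3) : ∫ g, |inner ℝ w g| ∂ballMeasure = ballConst * ‖w‖ := by
  have hn : ‖w‖ = ‖‖w‖ • e3‖ := by simp [norm_smul, norm_e3]
  have hr := Submodule.reflection_sub hn
  rw [← integral_comp_isometry ((Submodule.span ℝ {w - ‖w‖ • e3})ᗮ.reflection)]
  have h2 : ∀ g, inner ℝ w ((Submodule.span ℝ {w - ‖w‖ • e3})ᗮ.reflection g) =
      ‖w‖ * inner ℝ e3 g := by
    intro g
    rw [inner_reflection, hr, real_inner_smul_left]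
  simp_rw [h2, abs_mul, abs_norm]
  rw [integral_const_mul, ballConst, mul_comm]

lemma integrable_sgn_mul (u : E3) {F : E3 → ℝ} (hF : Integrable F ballMeasure) :
    Integrable (fun g => sgn (inner ℝ u g) * F g) ballMeasure :=
  hF.bdd_mul (c := 1) (measurable_sgn.comp (by fun_prop)).aestronglyMeasurable
    (Filter.Eventually.of_forall fun _ => abs_sgn_le _)

/-- The reflection `R` in the line of `u` preserves `u·g`, so `w` may be replaced by
`(w + R w)/2 = ⟪u, w⟫ u`. -/
lemma integral_sgn_inner (u w : E3) (hu : ‖u‖ = 1) :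
    ∫ g, sgn (inner ℝ u g) * inner ℝ w g ∂ballMeasure = ballConst * inner ℝ u w := by
  set R := (Submodule.span ℝ {u}).reflection with hR
  have hRw : ∀ w, R w = (2 * inner ℝ u w) • u - w := by
    intro w
    rw [hR, Submodule.reflection_singleton_apply, hu]
    simp [two_smul, add_smul, two_mul]
  have hRu : R u = u := by
    rw [hRw, real_inner_self_eq_norm_sq, hu, two_mul, add_smul]
    simp
  have h1 : ∫ g, sgn (inner ℝ u g) * inner ℝ w g ∂ballMeasure =
      ∫ g, sgn (inner ℝ u g) * inner ℝ (R w) g ∂ballMeasure := by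
    rw [← integral_comp_isometry R]
    simp_rw [hR, inner_reflection, ← hR, hRu]
  have h2 : ∫ g, sgn (inner ℝ u g) * inner ℝ (R w) g ∂ballMeasure =
      2 * inner ℝ u w * ballConst - ∫ g, sgn (inner ℝ u g) * inner ℝ w g ∂ballMeasure := by
    have h3 : ballConst = ∫ g, |inner ℝ u g| ∂ballMeasure := by
      rw [integral_abs_inner, hu, mul_one]
    rw [h3, ← integral_const_mul, ← integral_sub ((integrable_inner u).abs.const_mul _)
      (integrable_sgn_mul u (integrable_inner w))]
    refine integral_congr_ae (Filter.Eventually.of_forall fun g => ?_)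
    simp only
    rw [hRw, inner_sub_left, real_inner_smul_left, ← sgn_mul_self]
    ring
  linarith

lemma ballConst_pos : 0 < ballConst := by
  unfold ballConst
  rw [integral_pos_iff_support_of_nonneg (fun g => abs_nonneg _) (integrable_inner e3).abs]
  have hopen : IsOpen (Function.support fun g : E3 => |inner ℝ e3 g|) :=
    Continuous.isOpen_support (by fun_prop)
  unfold ballMeasure
  rw [Measure.restrict_apply hopen.measurableSet]
  refine (hopen.inter Metric.isOpen_ball).measure_pos volume ⟨(1 / 2 : ℝ) • e3, ?_, ?_⟩
  · simp [Function.mem_support, real_inner_smul_right, norm_e3]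
  · simp [norm_smul, norm_e3]; norm_num

/-! ### The local model -/

/-- Alice's answer along `u` at hidden variable `g`. -/
def alice (u g : E3) : ℝ := sgn (inner ℝ u g) * sgn (inner ℝ e3 g)

/-- The mean of Bob's answer at hidden variable `g`, where `w` is the vector for which the quantum
correlation with Alice's direction `u` is `⟪u, w⟫`.  The numerator is `⟪w, g⟫` clamped to
`[-c |g₃|, c |g₃|]`, times the sign of `g₃`.  The value is `0` when `c g₃ = 0`. -/
def bob (c : ℝ) (w g : E3) : ℝ :=
  ((|inner ℝ w g + c * inner ℝ e3 g| - |inner ℝ w g - c * inner ℝ e3 g|) / 2) /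
    (c * |inner ℝ e3 g|)

lemma measurable_alice (u : E3) : Measurable (alice u) := by
  unfold alice
  exact (measurable_sgn.comp (by fun_prop)).mul (measurable_sgn.comp (by fun_prop))

lemma measurable_bob (c : ℝ) (w : E3) : Measurable (bob c w) := by
  unfold bob
  fun_prop

lemma abs_alice_le (u g : E3) : |alice u g| ≤ 1 := by
  rw [alice, abs_mul]
  exact mul_le_one₀ (abs_sgn_le _) (abs_nonneg _) (abs_sgn_le _)

lemma abs_clamp_le {c : ℝ} (hc : 0 ≤ c) (y t : ℝ) :
    |(|y + c * t| - |y - c * t|) / 2| ≤ c * |t| := by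
  have h := abs_abs_sub_abs_le_abs_sub (y + c * t) (y - c * t)
  rw [show y + c * t - (y - c * t) = 2 * (c * t) by ring, abs_mul, abs_two, abs_mul,
    abs_of_nonneg hc] at h
  rw [abs_div, abs_two]
  linarith

lemma abs_bob_le {c : ℝ} (hc : 0 ≤ c) (w g : E3) : |bob c w g| ≤ 1 := by
  rw [bob, abs_div]
  have h0 : 0 ≤ c * |(inner ℝ e3 g : ℝ)| := by positivity
  rw [abs_of_nonneg h0]
  exact div_le_one_of_le₀ (abs_clamp_le hc _ _) h0

lemma mul_bob {c : ℝ} (hc : 0 ≤ c) (w g : E3) :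
    c * (|inner ℝ e3 g| * bob c w g) =
      (|inner ℝ (w + c • e3) g| - |inner ℝ (w - c • e3) g|) / 2 := by
  rw [← mul_assoc, bob, inner_add_left, inner_sub_left, real_inner_smul_left]
  have h := abs_clamp_le hc (inner ℝ w g) (inner ℝ e3 g)
  rcases eq_or_ne (c * |(inner ℝ e3 g : ℝ)|) 0 with h0 | h0
  · rw [h0] at h ⊢
    rw [zero_mul]
    exact (abs_nonpos_iff.1 h).symm
  · rw [mul_div_cancel₀ _ h0]

lemma integral_alice (u : E3) (hu : ‖u‖ = 1) :
    ∫ g, |inner ℝ e3 g| * alice u g ∂ballMeasure = ballConst * inner ℝ u e3 := by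
  rw [← integral_sgn_inner u e3 hu]
  refine integral_congr_ae (Filter.Eventually.of_forall fun g => ?_)
  simp only [alice]
  conv_rhs => rw [← abs_mul_sgn (inner ℝ e3 g)]
  ring

lemma integral_bob {c : ℝ} (hc : 0 ≤ c) (w : E3) :
    c * ∫ g, |inner ℝ e3 g| * bob c w g ∂ballMeasure =
      ballConst * ((‖w + c • e3‖ - ‖w - c • e3‖) / 2) := by
  rw [← integral_const_mul]
  simp_rw [mul_bob hc]
  rw [integral_div, integral_sub (integrable_inner _).abs (integrable_inner _).abs,
    integral_abs_inner, integral_abs_inner]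
  ring

/-- The error committed by the clamp: `max (|y|, c|t|) - c|t|`, with the maximum written as
`(|y + ct| + |y - ct|)/2`. -/
lemma abs_sub_sgn_mul_clamp_le {c : ℝ} (hc : 0 ≤ c) (y t : ℝ) :
    |y - sgn t * ((|y + c * t| - |y - c * t|) / 2)| ≤
      (|y + c * t| + |y - c * t|) / 2 - c * |t| := by
  rcases lt_trichotomy t 0 with ht | rfl | ht
  · have hs : sgn t = -1 := by rw [sgn, abs_of_neg ht, div_neg, div_self ht.ne]
    have : c * t ≤ 0 := mul_nonpos_of_nonneg_of_nonpos hc ht.le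
    rw [hs, abs_of_neg ht]
    rcases abs_cases (y + c * t) with h1 | h1 <;> rcases abs_cases (y - c * t) with h2 | h2 <;>
      rw [h1.1, h2.1] <;> apply abs_le.2 <;> constructor <;> linarith
  · simp
  · have hs : sgn t = 1 := by rw [sgn, abs_of_pos ht, div_self ht.ne']
    have : 0 ≤ c * t := mul_nonneg hc ht.le
    rw [hs, abs_of_pos ht]
    rcases abs_cases (y + c * t) with h1 | h1 <;> rcases abs_cases (y - c * t) with h2 | h2 <;>
      rw [h1.1, h2.1] <;> apply abs_le.2 <;> constructor <;> linarith

lemma integrable_weight_mul {F : E3 → ℝ} (hF : Measurable F) (hF1 : ∀ g, |F g| ≤ 1) :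
    Integrable (fun g => |inner ℝ e3 g| * F g) ballMeasure :=
  (integrable_inner e3).abs.mul_bdd (c := 1) hF.aestronglyMeasurable
    (Filter.Eventually.of_forall hF1)

lemma measurable_alice_mul_bob (c : ℝ) (u w : E3) :
    Measurable (fun g => alice u g * bob c w g) :=
  (measurable_alice u).mul (measurable_bob c w)

lemma abs_alice_mul_bob_le {c : ℝ} (hc : 0 ≤ c) (u w g : E3) : |alice u g * bob c w g| ≤ 1 := by
  rw [abs_mul]
  exact mul_le_one₀ (abs_alice_le u g) (abs_nonneg _) (abs_bob_le hc w g)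

/-- The correlation of the model, scaled by `c`, differs from the quantum one by no more than the
mean error of the clamp. -/
lemma correlation_bound {c : ℝ} (hc : 0 ≤ c) (u w : E3) (hu : ‖u‖ = 1) :
    |ballConst * inner ℝ u w -
        c * ∫ g, |inner ℝ e3 g| * (alice u g * bob c w g) ∂ballMeasure| ≤
      ballConst * ((‖w + c • e3‖ + ‖w - c • e3‖) / 2 - c) := by
  have hint := (integrable_weight_mul (measurable_alice_mul_bob c u w)
    (abs_alice_mul_bob_le hc u w)).const_mul c
  have hR : ∫ g, ((|inner ℝ (w + c • e3) g| + |inner ℝ (w - c • e3) g|) / 2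
        - c * |inner ℝ e3 g|) ∂ballMeasure =
      ballConst * ((‖w + c • e3‖ + ‖w - c • e3‖) / 2 - c) := by
    rw [integral_sub (((integrable_inner _).abs.fun_add (integrable_inner _).abs).div_const 2)
      ((integrable_inner _).abs.const_mul c), integral_div,
      integral_add (integrable_inner _).abs (integrable_inner _).abs, integral_const_mul,
      integral_abs_inner, integral_abs_inner, integral_abs_inner, norm_e3]
    ring
  rw [← integral_sgn_inner u w hu, ← integral_const_mul,
    ← integral_sub (integrable_sgn_mul u (integrable_inner w)) hint, ← hR, ← Real.norm_eq_abs]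
  refine norm_integral_le_of_norm_le
    ((((integrable_inner _).abs.fun_add (integrable_inner _).abs).div_const 2).sub
      ((integrable_inner _).abs.const_mul c)) (Filter.Eventually.of_forall fun g => ?_)
  have h1 : c * (|inner ℝ e3 g| * (alice u g * bob c w g)) =
      alice u g * (c * (|inner ℝ e3 g| * bob c w g)) := by ring
  have h2 := abs_sub_sgn_mul_clamp_le hc (inner ℝ w g) (inner ℝ e3 g)
  rw [h1, mul_bob hc, alice, mul_assoc, ← mul_sub, Real.norm_eq_abs, abs_mul]
  rw [inner_add_left, inner_sub_left, real_inner_smul_left]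
  exact (mul_le_of_le_one_left (abs_nonneg _) (abs_sgn_le _)).trans h2

/-! ### The decomposition -/

/-- The vector `w` with `⟪u, w⟫ = u₃ v₃ + s (u₁ v₁ - u₂ v₂)`. -/
def corrVec (s : ℝ) (v : E3) : E3 := !₂[s * v 0, -(s * v 1), v 2]

lemma inner_corrVec (s : ℝ) (u v : E3) :
    inner ℝ u (corrVec s v) = u 2 * v 2 + s * (u 0 * v 0 - u 1 * v 1) := by
  simp [corrVec, PiLp.inner_apply, Fin.sum_univ_three]
  ring

lemma inner_e3 (u : E3) : inner ℝ u e3 = u 2 := by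
  simp [e3, PiLp.inner_apply]

lemma sum_sq_eq_one {v : E3} (hv : ‖v‖ = 1) : v 0 ^ 2 + v 1 ^ 2 + v 2 ^ 2 = 1 := by
  have h := EuclideanSpace.real_norm_sq_eq v
  rw [hv, Fin.sum_univ_three] at h
  linarith

/-- For `v` a unit vector and `s² + d² = 1`, `‖w_v + d e₃‖ = 1 + d v₃`; used with `d = ±c`. -/
lemma norm_corrVec_add {s d : ℝ} (h : s ^ 2 + d ^ 2 = 1) {v : E3} (hv : ‖v‖ = 1) :
    ‖corrVec s v + d • e3‖ = 1 + d * v 2 := by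
  have hv2 := sum_sq_eq_one hv
  have hd : 0 ≤ 1 + d * v 2 := by
    nlinarith [sq_nonneg (d + v 2), sq_nonneg s, sq_nonneg (v 0), sq_nonneg (v 1)]
  rw [← sq_eq_sq₀ (norm_nonneg _) hd, EuclideanSpace.real_norm_sq_eq, Fin.sum_univ_three]
  simp [corrVec, e3]
  linear_combination s ^ 2 * hv2 + (1 - v 2 ^ 2) * h

lemma norm_corrVec_sub {s c : ℝ} (h : s ^ 2 + c ^ 2 = 1) {v : E3} (hv : ‖v‖ = 1) :
    ‖corrVec s v - c • e3‖ = 1 - c * v 2 := by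
  have := norm_corrVec_add (s := s) (d := -c) (by rw [neg_sq, h]) hv
  rw [sub_eq_add_neg, ← neg_smul, this]
  ring

lemma exists_decomposition {M N : ℕ} {c s : ℝ} (hc : 0 ≤ c) (hc1 : c ≤ 1)
    (hcs : s ^ 2 + c ^ 2 = 1) (u : Fin M → E3) (v : Fin N → E3)
    (hu : ∀ x, ‖u x‖ = 1) (hv : ∀ y, ‖v y‖ = 1) :
    ∃ PL Q : Bool → Bool → Fin M → Fin N → ℝ,
      IsBehaviour PL ∧ LocalFree PL ∧ IsBehaviour Q ∧
      ∀ a b x y, (1 / 4) * (1 + outVal a * c * u x 2 + outVal b * c * v y 2 +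
          outVal a * outVal b * (u x 2 * v y 2 + s * (u x 0 * v y 0 - u x 1 * v y 1))) =
        c * PL a b x y + (1 - c) * Q a b x y := by
  have hK := ballConst_pos
  let ρ : E3 → ℝ := fun g => |inner ℝ e3 g| / ballConst
  let PL : Bool → Bool → Fin M → Fin N → ℝ := fun a b x y =>
    ∫ g, ρ g * resp (alice (u x) g) a * resp (bob c (corrVec s (v y)) g) b ∂ballMeasure
  have hLF : LocalFree PL := by
    refine localFree_of_integral ballMeasure ρ (fun x => alice (u x))
      (fun y => bob c (corrVec s (v y))) (fun g => by positivity)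
      ((integrable_inner e3).abs.div_const _) ?_ (fun x => measurable_alice _)
      (fun y => measurable_bob _ _) (fun x => abs_alice_le _) (fun y => abs_bob_le hc _)
    simp only [ρ]
    rw [integral_div, ← ballConst, div_self hK.ne']
  let EL : Fin M → Fin N → ℝ := fun x y =>
    (∫ g, |inner ℝ e3 g| * (alice (u x) g * bob c (corrVec s (v y)) g) ∂ballMeasure) / ballConst
  let D : Fin M → Fin N → ℝ := fun x y =>
    u x 2 * v y 2 + s * (u x 0 * v y 0 - u x 1 * v y 1) - c * EL x y
  have hD : ∀ x y, |D x y| ≤ 1 - c := by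
    intro x y
    have h := correlation_bound hc (u x) (corrVec s (v y)) (hu x)
    rw [norm_corrVec_add hcs (hv y), norm_corrVec_sub hcs (hv y), inner_corrVec] at h
    have h2 : D x y * ballConst = ballConst * (u x 2 * v y 2 + s * (u x 0 * v y 0 - u x 1 * v y 1))
        - c * ∫ g, |inner ℝ e3 g| * (alice (u x) g * bob c (corrVec s (v y)) g) ∂ballMeasure := by
      simp only [D, EL]
      field_simp
    rw [← h2, abs_mul, abs_of_pos hK] at h
    have h3 : |D x y| * ballConst ≤ (1 - c) * ballConst := h.trans_eq (by ring)
    exact le_of_mul_le_mul_right h3 hK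
  have hPL : ∀ a b x y, c * PL a b x y = (1 / 4) * (c + outVal a * c * u x 2 +
      outVal b * c * v y 2 + outVal a * outVal b * (c * EL x y)) := by
    intro a b x y
    have hA := integral_alice (u x) (hu x)
    have hB := integral_bob hc (corrVec s (v y))
    rw [norm_corrVec_add hcs (hv y), norm_corrVec_sub hcs (hv y)] at hB
    rw [inner_e3] at hA
    have i0 := (integrable_inner e3).abs
    have i1 := (integrable_weight_mul (measurable_alice (u x)) (abs_alice_le _)).const_mul (outVal a)
    have i2 := (integrable_weight_mul (measurable_bob c (corrVec s (v y)))
      (abs_bob_le hc _)).const_mul (outVal b)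
    have i3 := (integrable_weight_mul (measurable_alice_mul_bob c (u x) (corrVec s (v y)))
      (abs_alice_mul_bob_le hc _ _)).const_mul (outVal a * outVal b)
    have hexp : PL a b x y = (∫ g, (|inner ℝ e3 g| + outVal a * (|inner ℝ e3 g| * alice (u x) g)
        + outVal b * (|inner ℝ e3 g| * bob c (corrVec s (v y)) g)
        + outVal a * outVal b * (|inner ℝ e3 g| * (alice (u x) g * bob c (corrVec s (v y)) g)))
          ∂ballMeasure) / (4 * ballConst) := by
      rw [← integral_div]
      refine integral_congr_ae (Filter.Eventually.of_forall fun g => ?_)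
      simp only [ρ, resp]
      field_simp
      ring
    rw [integral_add ((i0.fun_add i1).fun_add i2) i3, integral_add (i0.fun_add i1) i2, integral_add i0 i1,
      integral_const_mul, integral_const_mul, integral_const_mul, hA, ← ballConst] at hexp
    rw [hexp]
    simp only [EL]
    field_simp
    linear_combination outVal b * hB
  -- For `c = 1` the quotient is the junk value `0`, which is harmless as then `D = 0`.
  let r : Fin M → Fin N → ℝ := fun x y => D x y / (1 - c)
  have hr : ∀ x y, |r x y| ≤ 1 := by
    intro x y
    have h0 : 0 ≤ 1 - c := by linarith
    simp only [r]
    rw [abs_div, abs_of_nonneg h0]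
    exact div_le_one_of_le₀ (hD x y) h0
  have hrD : ∀ x y, (1 - c) * r x y = D x y := by
    intro x y
    rcases eq_or_ne (1 - c) 0 with h0 | h0
    · have := hD x y
      rw [h0] at this ⊢
      rw [zero_mul, abs_nonpos_iff.1 this]
    · simp only [r]
      rw [mul_div_cancel₀ _ h0]
  refine ⟨PL, fun a b x y => (1 / 4) * (1 + outVal a * outVal b * r x y), hLF.isBehaviour, hLF,
    ⟨fun a b x y => ?_, fun x y => ?_⟩, fun a b x y => ?_⟩
  · have := abs_le.1 (hr x y)
    cases a <;> cases b <;> simp [outVal] <;> linarith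
  · simp [outVal]
    ring
  · have h := hrD x y
    simp only [D] at h
    rw [hPL]
    linear_combination (-(1 / 4) * outVal a * outVal b) * h

theorem qstate_local_decomposition (θ : ℝ) (hθ : θ ∈ Set.Icc (0 : ℝ) (Real.pi / 2))
    {M N : ℕ} (u : Fin M → EuclideanSpace ℝ (Fin 3)) (v : Fin N → EuclideanSpace ℝ (Fin 3))
    (hu : ∀ x, ‖u x‖ = 1) (hv : ∀ y, ‖v y‖ = 1) :
    (∃ PL Q : Bool → Bool → Fin M → Fin N → ℝ,
      IsBehaviour PL ∧ LocalFree PL ∧ IsBehaviour Q ∧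
      ∀ a b x y, qBehaviour θ u v a b x y =
        Real.cos θ * PL a b x y + (1 - Real.cos θ) * Q a b x y) ∧
    Real.cos θ ≤ sSup {p : ℝ | p ∈ Set.Icc (0 : ℝ) 1 ∧
      ∃ PL Q : Bool → Bool → Fin M → Fin N → ℝ,
        IsBehaviour PL ∧ LocalFree PL ∧ IsBehaviour Q ∧
        ∀ a b x y, qBehaviour θ u v a b x y = p * PL a b x y + (1 - p) * Q a b x y} := by
  have hc : 0 ≤ Real.cos θ :=
    Real.cos_nonneg_of_mem_Icc ⟨by linarith [hθ.1, Real.pi_pos], hθ.2⟩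
  have hc1 := Real.cos_le_one θ
  have h := exists_decomposition hc hc1 (Real.sin_sq_add_cos_sq θ) u v hu hv
  exact ⟨h, le_csSup ⟨1, fun p hp => hp.1.2⟩ ⟨⟨hc, hc1⟩, h⟩⟩
end
end

section
/- For every behaviour P with M settings, the supremum of the free weight over all LHV models of P with setting distribution p is the same for every full-support setting distribution p; that is, for any two setting distributions p and p′ with p(x,y) > 0 and p′(x,y) > 0 for all x,y, sup{free weight of N : N an LHV model of P with setting distribution p} = sup{free weight of N : N an LHV model of P with setting distribution p′}. Consequently μ_F(P) equals the supremum of free weights of LHV models of P for any fixed full-support setting distribution. -/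
/-!
Neither the constraint that a model reproduce `P` nor locality involves the setting distribution,
which enters only through the marginal `q`. So the conditionals `q(·|x,y)` and the outcome
distributions of a model for `p` also form a model for `p'`, once `q` is recomputed as the
`p'`-average (`HVModel.changeDist`). A point is free for a given setting distribution exactly when
`q(λ|x,y)` does not depend on `(x,y)`, in which case every average of it is that constant value.
Hence the free points and their weights are preserved, and the *sets* of attainable free weights
for `p` and `p'` coincide (`LHVFreeWeights_subset`); both claims follow.
-/

open scoped BigOperators Classical
open Finset

noncomputable section

/-- Averaging a constant against a setting distribution returns the constant. -/
lemma IsSettingDist.average_const {M : ℕ} {p : Fin M → Fin M → ℝ} (hp : IsSettingDist p) (c : ℝ) :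
    ∑ x, ∑ y, c * p x y = c := by
  simp_rw [← Finset.mul_sum]
  rw [hp.2, mul_one]

namespace HVModel

variable {M : ℕ} {P : Bool → Bool → Fin M → Fin M → ℝ} {p p' : Fin M → Fin M → ℝ}

/-- The model for the setting distribution `p'` with the same conditional distributions `qc` and
`Pc` as `N`; only the marginal `q` changes. -/
def changeDist (N : HVModel M P p) (hp' : IsSettingDist p') : HVModel M P p' where
  n := N.n
  q l := ∑ x, ∑ y, N.qc x y l * p' x y
  q_nonneg l := Finset.sum_nonneg fun x _ => Finset.sum_nonneg fun y _ =>
    mul_nonneg (N.qc_nonneg x y l) (hp'.1 x y).le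
  q_sum := by
    rw [Finset.sum_comm]
    simp_rw [Finset.sum_comm (s := (Finset.univ : Finset (Fin N.n))), ← Finset.sum_mul,
      N.qc_sum, one_mul]
    exact hp'.2
  qc := N.qc
  qc_nonneg := N.qc_nonneg
  qc_sum := N.qc_sum
  q_marg _ := rfl
  Pc := N.Pc
  Pc_nonneg := N.Pc_nonneg
  Pc_sum := N.Pc_sum
  reproduce := N.reproduce

lemma q_eq_of_const (N : HVModel M P p) (hp : IsSettingDist p) {l : Fin N.n} {c : ℝ}
    (h : ∀ x y, N.qc x y l = c) : N.q l = c := by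
  rw [N.q_marg l]
  simp_rw [h]
  exact hp.average_const c

lemma changeDist_freeWeight (N : HVModel M P p) (hp : IsSettingDist p) (hp' : IsSettingDist p') :
    (N.changeDist hp').freeWeight = N.freeWeight := by
  refine Finset.sum_congr rfl fun (l : Fin N.n) _ => ?_
  by_cases h : N.IsFreePoint l
  · have hq : (N.changeDist hp').q l = N.q l := (N.changeDist hp').q_eq_of_const hp' h
    have h' : (N.changeDist hp').IsFreePoint l := fun x y => (h x y).trans hq.symm
    rw [if_pos h, if_pos h', hq]
  · have h' : ¬ (N.changeDist hp').IsFreePoint l := fun hf =>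
      h fun x y => (hf x y).trans (N.q_eq_of_const hp hf).symm
    rw [if_neg h, if_neg h']

end HVModel

lemma LHVFreeWeights_subset {M : ℕ} (P : Bool → Bool → Fin M → Fin M → ℝ)
    {p p' : Fin M → Fin M → ℝ} (hp : IsSettingDist p) (hp' : IsSettingDist p') :
    LHVFreeWeights M P p ⊆ LHVFreeWeights M P p' := by
  rintro w ⟨N, hN, rfl⟩
  exact ⟨N.changeDist hp', hN, (N.changeDist_freeWeight hp hp').symm⟩

theorem sup_LHV_freeWeight_setting_independent (M : ℕ)
    (P : Bool → Bool → Fin M → Fin M → ℝ) (hP : IsBehaviour P) :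
    (∀ p p' : Fin M → Fin M → ℝ, IsSettingDist p → IsSettingDist p' →
      sSup (LHVFreeWeights M P p) = sSup (LHVFreeWeights M P p')) ∧
    (∀ p : Fin M → Fin M → ℝ, IsSettingDist p →
      muF M P = sSup (LHVFreeWeights M P p)) := by
  have key : ∀ p p' : Fin M → Fin M → ℝ, IsSettingDist p → IsSettingDist p' →
      sSup (LHVFreeWeights M P p) = sSup (LHVFreeWeights M P p') := fun p p' hp hp' =>
    congrArg sSup ((LHVFreeWeights_subset P hp hp').antisymm (LHVFreeWeights_subset P hp' hp))
  refine ⟨key, fun p hp => ?_⟩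
  -- The infimum is over a nonempty index set, since `p` itself belongs to it.
  have : Nonempty {f : Fin M → Fin M → ℝ // IsSettingDist f} := ⟨⟨p, hp⟩⟩
  unfold muF
  simp_rw [fun sp : {f : Fin M → Fin M → ℝ // IsSettingDist f} => key sp.1 p sp.2 hp]
  exact ciInf_const
end
end
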